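/- Let $K$ be a field and $G$ the graph formed by two cycles $C_n$ and $C_m$ joined by a path with $k \geq 1$ internal vertices (so $N = |V(G)| = n + m + k$). If $N \equiv 1 \pmod 3$ and both $n \equiv 2$ and $m \equiv 2 \pmod 3$, then $\operatorname{ara}\, I(G) = \operatorname{pd}_R(R/I(G)) = \frac{2N-2}{3}$; if $N \equiv 1 \pmod 3$ but not both of $n, m$ are $\equiv 2 \pmod 3$, then $\operatorname{ara}\, I(G) = \operatorname{pd}_R(R/I(G)) = \frac{2N+1}{3}$. -/

import Mathlib

open MvPolynomial

/-- Arithmetical rank: the least number of elements of `R` generating `I` up to radical. -/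
noncomputable def araRank {R : Type} [CommRing R] (I : Ideal R) : ℕ :=
  sInf {s : ℕ | ∃ f : Fin s → R, (Ideal.span (Set.range f)).radical = I.radical}


/-- Projective dimension of an `R`-module `M`, characterized via vanishing of the
`Ext` functors: the least `d` such that `Ext^i(M, N) = 0` for all `i > d` and all `N`. -/
noncomputable def projDim (R : Type) [CommRing R] (M : Type) [AddCommGroup M]
    [Module R M] : ℕ∞ :=
  sInf {d : ℕ∞ | ∀ i : ℕ, d < i → ∀ N : ModuleCat R,
    Subsingleton (((Ext R (ModuleCat R) i).obj (Opposite.op (ModuleCat.of R M))).obj N)}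

/-- The `j`-th vertex of the connecting path `x₁ z₁ z₂ ⋯ z_k y₁` in the graph made of two
cycles `Cₙ` and `C_m` joined by a path with `k` internal vertices.  The `N = n + m + k`
vertices are indexed by `ZMod N`: `Cₙ` has vertices `0,…,n-1` (with `y₁ = 0`), `C_m`
has vertices `n,…,n+m-1` (with `x₁ = n`), and `z₁,…,z_k` are `n+m,…,n+m+k-1`. -/
def pathJoinVertex (n m k : ℕ) (j : ℕ) : ZMod (n + m + k) :=
  if j = 0 then ((n : ℕ) : ZMod (n + m + k))
  else if j = k + 1 then 0
  else ((n + m + j - 1 : ℕ) : ZMod (n + m + k))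

/-- The edge ideal of the graph consisting of two cycles `Cₙ` (vertices `0,…,n-1`) and
`C_m` (vertices `n,…,n+m-1`) joined by the path `x₁ z₁ ⋯ z_k y₁` with `k` internal
vertices `n+m,…,n+m+k-1`, where `x₁ = n` and `y₁ = 0`. -/
noncomputable def pathJoinIdeal (K : Type) [Field K] (n m k : ℕ) :
    Ideal (MvPolynomial (ZMod (n + m + k)) K) :=
  Ideal.span
    (((fun j : ℕ => (X ((j : ZMod (n + m + k))) * X (((j + 1 : ℕ) : ZMod (n + m + k))) :
        MvPolynomial (ZMod (n + m + k)) K)) '' Set.Iio (n - 1))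
      ∪ {X (((n - 1 : ℕ) : ZMod (n + m + k))) * X 0}
      ∪ ((fun j : ℕ => (X ((j : ZMod (n + m + k))) * X (((j + 1 : ℕ) : ZMod (n + m + k))) :
          MvPolynomial (ZMod (n + m + k)) K)) '' Set.Ico n (n + m - 1))
      ∪ {X (((n + m - 1 : ℕ) : ZMod (n + m + k))) * X (((n : ℕ) : ZMod (n + m + k)))}
      ∪ ((fun j : ℕ => (X (pathJoinVertex n m k j) * X (pathJoinVertex n m k (j + 1)) :
          MvPolynomial (ZMod (n + m + k)) K)) '' Set.Iio (k + 1)))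

section ExtBridge
open CategoryTheory Limits

theorem subsingleton_derivedExt_iff {R : Type} [CommRing R] (X N : ModuleCat.{0} R) (p : ℕ) :
    Subsingleton (((Ext R (ModuleCat R) (p + 1)).obj (Opposite.op X)).obj N) ↔
      Subsingleton (Abelian.Ext X N (p + 1)) := by
  let P := projectiveResolution X
  rw [← ModuleCat.isZero_iff_subsingleton, (P.isoExt (p + 1) N).isZero_iff,
    ← HomologicalComplex.exactAt_iff_isZero_homology,
    HomologicalComplex.exactAt_iff' _ p (p + 1) (p + 2) (by simp) (by simp),
    ShortComplex.moduleCat_exact_iff]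
  constructor
  · intro h
    refine ⟨fun a b => ?_⟩
    have key : ∀ a : Abelian.Ext X N (p + 1), a = 0 := by
      intro a
      obtain ⟨f, hf, rfl⟩ := P.extMk_surjective a (p + 2) rfl
      rw [P.extMk_eq_zero_iff f (p + 2) rfl hf p rfl]
      exact h f hf
    rw [key a, key b]
  · intro h f hf
    exact (P.extMk_eq_zero_iff (Y := N) f (p + 2) rfl hf p rfl).1 (Subsingleton.elim _ _)

theorem projDim_eq_of_hasProjectiveDimensionLT {R : Type} [CommRing R] {M : Type}
    [AddCommGroup M] [Module R M] {d : ℕ}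
    (h₁ : HasProjectiveDimensionLT (ModuleCat.of R M) (d + 1))
    (h₂ : ¬ HasProjectiveDimensionLT (ModuleCat.of R M) d) (hd : 0 < d) :
    projDim R M = d := by
  apply le_antisymm
  · refine sInf_le fun i hi N => ?_
    have hi' : d < i := by exact_mod_cast hi
    obtain ⟨p, rfl⟩ : ∃ p, i = p + 1 := ⟨i - 1, by omega⟩
    rw [subsingleton_derivedExt_iff]
    exact HasProjectiveDimensionLT.subsingleton _ (d + 1) _ hi' N
  · refine le_sInf fun e he => ?_
    by_contra hlt
    push Not at hlt
    apply h₂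
    rw [hasProjectiveDimensionLT_iff]
    intro i hi N a
    obtain ⟨p, rfl⟩ : ∃ p, i = p + 1 := ⟨i - 1, by omega⟩
    have := he (p + 1) (hlt.trans_le (by exact_mod_cast hi)) N
    rw [subsingleton_derivedExt_iff] at this
    exact Subsingleton.elim _ _

end ExtBridge

section ExtKills
open CategoryTheory Limits Abelian

universe w v u

variable {C : Type u} [Category.{v} C] [Abelian C] [HasExt.{w} C]

/-- A morphism inducing zero on `Ext^i(-, M)` for every `i > s` and every `M`. -/
def ExtKills {A B : C} (g : A ⟶ B) (s : ℕ) : Prop :=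
  ∀ (M : C) (i : ℕ), s < i → ∀ α : Ext B M i, (Ext.mk₀ g).comp α (zero_add i) = 0

namespace ExtKills

theorem precomp {A A' B : C} {g : A ⟶ B} {s : ℕ} (h : ExtKills g s) (f : A' ⟶ A) :
    ExtKills (f ≫ g) s := by
  intro M i hi α
  rw [← Ext.mk₀_comp_mk₀_assoc, h M i hi, Ext.comp_zero]

theorem postcomp {A B B' : C} {g : A ⟶ B} {s : ℕ} (h : ExtKills g s) (f : B ⟶ B') :
    ExtKills (g ≫ f) s := by
  intro M i hi α
  rw [← Ext.mk₀_comp_mk₀_assoc, h M i hi]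

theorem of_projective {A B P : C} [Projective P] (f : A ⟶ P) (g : P ⟶ B) (s : ℕ) :
    ExtKills (f ≫ g) s := by
  intro M i hi α
  obtain ⟨j, rfl⟩ : ∃ j, i = j + 1 := ⟨i - 1, by omega⟩
  rw [← Ext.mk₀_comp_mk₀_assoc, Ext.eq_zero_of_projective ((Ext.mk₀ g).comp α _), Ext.comp_zero]

theorem hasProjectiveDimensionLT {A : C} {s : ℕ} (h : ExtKills (𝟙 A) s) :
    HasProjectiveDimensionLT A (s + 1) := by
  rw [hasProjectiveDimensionLT_iff]
  intro i hi Y e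
  simpa using h Y i hi e

/-- In a morphism of short exact sequences, killing on the first terms propagates to the third
ones with a degree shift. -/
theorem of_shortExact {S T : ShortComplex C} (hS : S.ShortExact) (hT : T.ShortExact) (φ : S ⟶ T)
    {Z : C} (g : T.X₃ ⟶ Z) {s : ℕ} (h₁ : ExtKills φ.τ₁ s) (h₂ : ExtKills (T.g ≫ g) s) :
    ExtKills (φ.τ₃ ≫ g) (s + 1) := by
  intro M i hi α
  obtain ⟨j, rfl⟩ : ∃ j, i = 1 + j := ⟨i - 1, by omega⟩
  have h0 := h₂ M (1 + j) (by omega) α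
  rw [← Ext.mk₀_comp_mk₀_assoc] at h0
  obtain ⟨β, hβ⟩ := Ext.contravariant_sequence_exact₃ hT M _ h0 rfl
  rw [← Ext.mk₀_comp_mk₀_assoc, ← hβ,
    ← Ext.comp_assoc (a₁₂ := 1) (a₂₃ := 1 + j) _ _ _ (by omega) (by omega) (by omega),
    ← ShortComplex.ShortExact.extClass_naturality hS hT φ,
    Ext.comp_assoc (a₁₂ := 1) (a₂₃ := j) _ _ _ (by omega) (by omega) (by omega),
    h₁ M j (by omega), Ext.comp_zero]

variable [EnoughProjectives C]

theorem map {A B : C} {g : A ⟶ B} {s : ℕ} (h : ExtKills g s)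
    {D : Type u} [Category.{v} D] [Abelian D] [HasExt.{w} D]
    (F : C ⥤ D) [F.Additive] [PreservesFiniteLimits F] [PreservesFiniteColimits F]
    [F.PreservesProjectiveObjects] :
    ExtKills (F.map g) s := by
  induction s generalizing A B with
  | zero =>
    let S := ShortComplex.mk _ _ (kernel.condition (Projective.π B))
    have hS : S.ShortExact := { exact := ShortComplex.exact_kernel _ }
    have h0 := h S.X₁ 1 one_pos hS.extClass
    obtain ⟨f, hf⟩ := Ext.covariant_sequence_exact₃ A hS (Ext.mk₀ g) (zero_add 1) h0
    obtain ⟨f, rfl⟩ := (Ext.mk₀_bijective _ _).2 f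
    rw [Ext.mk₀_comp_mk₀] at hf
    have hf' : f ≫ Projective.π B = g := (Ext.mk₀_bijective _ _).1 hf
    rw [← hf', F.map_comp]
    have : Projective (F.obj (Projective.over B)) :=
      Functor.PreservesProjectiveObjects.projective_obj inferInstance
    exact of_projective _ _ _
  | succ s ih =>
    let S := ShortComplex.mk _ _ (kernel.condition (Projective.π A))
    have hS : S.ShortExact := { exact := ShortComplex.exact_kernel _ }
    let T := ShortComplex.mk _ _ (kernel.condition (Projective.π B))
    have hT : T.ShortExact := { exact := ShortComplex.exact_kernel _ }
    let q : Projective.over A ⟶ Projective.over B :=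
      Projective.factorThru (Projective.π A ≫ g) (Projective.π B)
    have hq : q ≫ Projective.π B = Projective.π A ≫ g := Projective.factorThru_comp _ _
    let φ : S ⟶ T :=
      { τ₁ := kernel.map _ _ q g hq.symm
        τ₂ := q
        τ₃ := g
        comm₁₂ := by simp [S, T]
        comm₂₃ := hq }
    have hφ : ExtKills φ.τ₁ s := by
      intro M i hi α
      have h1 : hS.extClass.comp ((Ext.mk₀ φ.τ₁).comp α (zero_add i)) (add_comm 1 i) = 0 := by
        rw [← Ext.comp_assoc (a₁₂ := 1) (a₂₃ := i) _ _ _ (by omega) (by omega) (by omega),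
          ShortComplex.ShortExact.extClass_naturality hS hT φ,
          Ext.comp_assoc (a₁₂ := 1) (a₂₃ := i + 1) _ _ _ (by omega) (by omega) (by omega)]
        exact h M (i + 1) (by omega) _
      obtain ⟨β, hβ⟩ := Ext.contravariant_sequence_exact₁ hS M _ (add_comm 1 i) h1
      obtain ⟨j, rfl⟩ : ∃ j, i = j + 1 := ⟨i - 1, by omega⟩
      have : Projective S.X₂ := inferInstanceAs (Projective (Projective.over A))
      rw [← hβ, Ext.eq_zero_of_projective β, Ext.comp_zero]
    have hP : Projective (F.obj (Projective.over B)) :=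
      Functor.PreservesProjectiveObjects.projective_obj inferInstance
    have := of_shortExact (hS.map F) (hT.map F)
      (F.mapShortComplex.map φ) (𝟙 _) (ih hφ) (s := s) (by
        have := of_projective (𝟙 (F.obj (Projective.over B))) (F.map (Projective.π B)) s
        rw [Category.id_comp] at this
        rw [Category.comp_id]
        exact this)
    rw [Category.comp_id] at this
    exact this

end ExtKills
end ExtKills

section QuotientMaps
open CategoryTheory Limits Abelian

variable {R : Type} [CommRing R]

/-- The morphism `R ⧸ A ⟶ R ⧸ B` given by multiplication by `r`. -/
noncomputable def quotMul (A B : Ideal R) (r : R) (h : ∀ x ∈ A, r * x ∈ B) :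
    ModuleCat.of R (R ⧸ A) ⟶ ModuleCat.of R (R ⧸ B) :=
  ModuleCat.ofHom (Submodule.mapQ A B (LinearMap.mulLeft R r) h)

theorem quotMul_apply (A B : Ideal R) (r : R) (h : ∀ x ∈ A, r * x ∈ B) (x : R) :
    (quotMul A B r h).hom (Ideal.Quotient.mk A x) = Ideal.Quotient.mk B (r * x) := rfl

theorem quotMul_comp {A B C : Ideal R} {r s : R} (h : ∀ x ∈ A, r * x ∈ B)
    (h' : ∀ x ∈ B, s * x ∈ C) :
    quotMul A B r h ≫ quotMul B C s h' =
      quotMul A C (s * r) (fun x hx => by rw [mul_assoc]; exact h' _ (h _ hx)) := by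
  refine ModuleCat.hom_ext (LinearMap.ext fun x => ?_)
  obtain ⟨x, rfl⟩ := Ideal.Quotient.mk_surjective x
  change Ideal.Quotient.mk C (s * (r * x)) = Ideal.Quotient.mk C (s * r * x)
  rw [mul_assoc]

/-- The complex `R ⧸ (B : f) ⟶ R ⧸ B ⟶ R ⧸ (B + (f))`. -/
noncomputable def colonComplex (A B C : Ideal R) (f : R) (hA : ∀ x, f * x ∈ B ↔ x ∈ A)
    (hC : C = B ⊔ Ideal.span {f}) : ShortComplex (ModuleCat R) :=
  ShortComplex.mk (quotMul A B f fun x hx => (hA x).2 hx)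
    (quotMul B C 1 fun x hx => by rw [one_mul, hC]; exact Ideal.mem_sup_left hx) (by
      rw [quotMul_comp]
      refine ModuleCat.hom_ext (LinearMap.ext fun x => ?_)
      obtain ⟨x, rfl⟩ := Ideal.Quotient.mk_surjective x
      rw [quotMul_apply, one_mul]
      refine Ideal.Quotient.eq_zero_iff_mem.2 ?_
      rw [hC]
      exact Ideal.mul_mem_right _ _ (Ideal.mem_sup_right (Ideal.mem_span_singleton_self f)))

theorem colonComplex_shortExact (A B C : Ideal R) (f : R) (hA : ∀ x, f * x ∈ B ↔ x ∈ A)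
    (hC : C = B ⊔ Ideal.span {f}) : (colonComplex A B C f hA hC).ShortExact := by
  refine { exact := ?_, mono_f := ?_, epi_g := ?_ }
  · rw [ShortComplex.moduleCat_exact_iff]
    intro y hy
    obtain ⟨y, rfl⟩ := Ideal.Quotient.mk_surjective y
    have hy' : Ideal.Quotient.mk C (1 * y) = 0 := hy
    rw [one_mul, Ideal.Quotient.eq_zero_iff_mem, hC, Submodule.mem_sup] at hy'
    obtain ⟨b, hb, z, hz, hbz⟩ := hy'
    obtain ⟨w, rfl⟩ := Ideal.mem_span_singleton'.1 hz
    refine ⟨Ideal.Quotient.mk A w, ?_⟩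
    change Ideal.Quotient.mk B (f * w) = Ideal.Quotient.mk B y
    rw [Ideal.Quotient.eq, ← hbz]
    convert B.neg_mem hb using 1
    ring
  · rw [ModuleCat.mono_iff_injective, injective_iff_map_eq_zero]
    intro x hx
    obtain ⟨x, rfl⟩ := Ideal.Quotient.mk_surjective x
    have hx' : Ideal.Quotient.mk B (f * x) = 0 := hx
    rw [Ideal.Quotient.eq_zero_iff_mem, hA] at hx'
    exact Ideal.Quotient.eq_zero_iff_mem.2 hx'
  · rw [ModuleCat.epi_iff_surjective]
    intro y
    obtain ⟨y, rfl⟩ := Ideal.Quotient.mk_surjective y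
    refine ⟨Ideal.Quotient.mk B y, ?_⟩
    change Ideal.Quotient.mk C (1 * y) = _
    rw [one_mul]

/-- The morphism of complexes `colonComplex` induced by an inclusion `B ≤ B'` and multiplication
by `r` on the first term. -/
noncomputable def colonComplexMap {A B C A' B' C' : Ideal R} {f f' : R}
    (hA : ∀ x, f * x ∈ B ↔ x ∈ A) (hC : C = B ⊔ Ideal.span {f})
    (hA' : ∀ x, f' * x ∈ B' ↔ x ∈ A') (hC' : C' = B' ⊔ Ideal.span {f'})
    (hB : B ≤ B') (r : R) (hr : f = f' * r) :
    colonComplex A B C f hA hC ⟶ colonComplex A' B' C' f' hA' hC' where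
  τ₁ := quotMul A A' r fun x hx => by
    rw [← hA', ← mul_assoc, ← hr]
    exact hB ((hA x).2 hx)
  τ₂ := quotMul B B' 1 fun x hx => by rw [one_mul]; exact hB hx
  τ₃ := quotMul C C' 1 fun x hx => by
    rw [one_mul]
    revert x
    change C ≤ C'
    rw [hC, hC', sup_le_iff, Ideal.span_singleton_le_iff_mem, hr]
    exact ⟨hB.trans le_sup_left, Ideal.mul_mem_right _ _
      (Ideal.mem_sup_right (Ideal.mem_span_singleton_self f'))⟩
  comm₁₂ := by
    simp only [colonComplex, quotMul_comp]
    congr 1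
    rw [hr, one_mul]
  comm₂₃ := by
    simp only [colonComplex, quotMul_comp]

/-- The ideal `(J : f)`. -/
def mulComap (f : R) (J : Ideal R) : Ideal R := Submodule.comap (LinearMap.mulLeft R f) J

theorem mem_mulComap {f : R} {J : Ideal R} {x : R} : x ∈ mulComap f J ↔ f * x ∈ J := Iff.rfl

/-- Every ideal `J` containing a power of `I` contains an ideal `J'` with the same property such
that `R ⧸ J' ⟶ R ⧸ J` kills `Ext^i` for `i` larger than the number of generators of `I`. -/
theorem exists_extKills_of_pow_le [IsNoetherianRing R] {s : ℕ} (f : Fin s → R) (J : Ideal R)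
    (hJ : ∃ b, Ideal.span (Set.range f) ^ b ≤ J) :
    ∃ J' : Ideal R, (∃ b, Ideal.span (Set.range f) ^ b ≤ J') ∧
      ∃ h : ∀ x ∈ J', 1 * x ∈ J, ExtKills (quotMul J' J 1 h) s := by
  induction s generalizing J with
  | zero =>
    refine ⟨⊥, ⟨1, by simp [Set.range_eq_empty]⟩, fun x hx => by simp_all, ?_⟩
    have : Module.Free R (R ⧸ (⊥ : Ideal R)) :=
      Module.Free.of_equiv (Submodule.quotEquivOfEqBot (⊥ : Ideal R) rfl).symm
    have : Projective (ModuleCat.of R (R ⧸ (⊥ : Ideal R))) := inferInstance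
    have := ExtKills.of_projective (𝟙 (ModuleCat.of R (R ⧸ (⊥ : Ideal R))))
      (quotMul ⊥ J 1 fun x hx => by simp_all) 0
    rwa [Category.id_comp] at this
  | succ s ih =>
    obtain ⟨b, hb⟩ := hJ
    set I := Ideal.span (Set.range (Fin.tail f)) with hI
    have hIf : Ideal.span (Set.range f) = I ⊔ Ideal.span {f 0} := by
      conv_lhs => rw [← Fin.cons_self_tail f, Fin.range_cons, Set.insert_eq, Ideal.span_union]
      rw [sup_comm]
    rw [hIf] at hb ⊢
    have hIb : I ^ b ≤ J := (Ideal.pow_right_mono le_sup_left b).trans hb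
    have hfb : f 0 ^ b ∈ J := hb (Ideal.pow_mem_pow
      (Ideal.mem_sup_right (Ideal.mem_span_singleton_self _)) b)
    obtain ⟨J', hJ'I, hJ'J, hk'⟩ := ih (Fin.tail f) J ⟨b, hIb⟩
    obtain ⟨J'', ⟨b'', hJ''I⟩, hJ''J', hk''⟩ := ih (Fin.tail f) J' hJ'I
    let col : ℕ → Ideal R := fun n => mulComap (f 0 ^ n) J''
    have hcol : ∀ n x, x ∈ col n ↔ f 0 ^ n * x ∈ J'' := fun n x => mem_mulComap
    have hmono : Monotone col := by
      intro p q hpq x hx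
      rw [hcol] at hx ⊢
      obtain ⟨r, rfl⟩ := Nat.exists_eq_add_of_le hpq
      rw [pow_add, mul_comm (f 0 ^ p), mul_assoc]
      exact Ideal.mul_mem_left _ _ hx
    obtain ⟨c, hc⟩ := monotone_stabilizes_iff_noetherian.2 ‹IsNoetherianRing R› ⟨col, hmono⟩
    have hc' : col (b + c) = col c := (hc (b + c) (by omega)).symm
    have hle1 : J'' ≤ J' := fun x hx => by simpa using hJ''J' x hx
    have hle2 : J' ≤ J := fun x hx => by simpa using hJ'J x hx
    let S := colonComplex (col (b + c)) J'' (J'' ⊔ Ideal.span {f 0 ^ (b + c)}) (f 0 ^ (b + c))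
      (fun x => (hcol _ x).symm) rfl
    let T := colonComplex (mulComap (f 0 ^ b) J') J'
      (J' ⊔ Ideal.span {f 0 ^ b}) (f 0 ^ b) (fun x => mem_mulComap.symm) rfl
    let φ : S ⟶ T := colonComplexMap _ _ _ _ hle1 (f 0 ^ c) (by rw [pow_add])
    have hTJ : ∀ x ∈ J' ⊔ Ideal.span {f 0 ^ b}, 1 * x ∈ J := by
      intro x hx
      rw [one_mul]
      exact (sup_le hle2 ((Ideal.span_singleton_le_iff_mem _).2 hfb)) hx
    have h₂ : ExtKills (T.g ≫ quotMul _ J 1 hTJ) s := by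
      simp only [T, colonComplex]
      rw [quotMul_comp]
      simpa only [one_mul] using hk'
    have h₁ : ExtKills φ.τ₁ s := by
      have e : φ.τ₁ = quotMul (col (b + c)) J'' (f 0 ^ c) (fun x hx => (hcol c x).1 (hc' ▸ hx)) ≫
          quotMul J'' J' 1 hJ''J' ≫ quotMul J' _ 1 (fun x hx => by
            rw [one_mul]
            exact mem_mulComap.2 (Ideal.mul_mem_left _ _ hx)) := by
        rw [quotMul_comp, quotMul_comp]
        simp only [φ, colonComplexMap, one_mul]
        rfl
      rw [e]
      exact (hk''.postcomp _).precomp _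
    have := ExtKills.of_shortExact (colonComplex_shortExact _ _ _ _ _ _)
      (colonComplex_shortExact _ _ _ _ _ _) φ (quotMul _ J 1 hTJ) h₁ h₂
    refine ⟨J'' ⊔ Ideal.span {f 0 ^ (b + c)}, ⟨b'' + (b + c), ?_⟩, ?_, ?_⟩
    · refine (Ideal.sup_pow_add_le_pow_sup_pow).trans ?_
      rw [Ideal.span_singleton_pow]
      exact sup_le_sup_right hJ''I _
    · intro x hx
      rw [one_mul]
      refine (sup_le (hle1.trans hle2) ((Ideal.span_singleton_le_iff_mem _).2 ?_)) hx
      rw [pow_add]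
      exact Ideal.mul_mem_right _ _ hfb
    · change ExtKills (quotMul (J'' ⊔ Ideal.span {f 0 ^ (b + c)}) (J' ⊔ Ideal.span {f 0 ^ b}) 1 _ ≫
        quotMul _ J 1 hTJ) (s + 1) at this
      rw [quotMul_comp] at this
      simpa only [one_mul] using this

end QuotientMaps

section Expand
open CategoryTheory Limits Abelian MvPolynomial

theorem restrictScalars_preservesProjectiveObjects {R S : Type} [CommRing R] [CommRing S]
    (f : R →+* S)
    (hf : Module.Projective R ((ModuleCat.restrictScalars.{0} f).obj (ModuleCat.of S S))) :
    (ModuleCat.restrictScalars.{0} f).PreservesProjectiveObjects where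
  projective_obj {P} hP := by
    let := f.toAlgebra
    let : Module R P := Module.compHom P f
    have : IsScalarTower R S P := ⟨fun r s p => by
      rw [Algebra.smul_def, mul_smul]; rfl⟩
    have hS : Module.Projective R S := hf
    have hP' : Module.Projective S P := inferInstance
    obtain ⟨s, hs⟩ := hP'
    have : Module.Projective R (P →₀ S) := by
      classical
      exact Module.Projective.of_equiv (finsuppLequivDFinsupp (ι := P) (M := S) R).symm
    have : Module.Projective R P := Module.Projective.of_split (M := P →₀ S) (s.restrictScalars R)
      ((Finsupp.linearCombination S id).restrictScalars R) (LinearMap.ext hs)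
    exact @ModuleCat.projective_of_categoryTheory_projective R _
      ((ModuleCat.restrictScalars.{0} f).obj P) this

variable {σ K : Type} [Field K]

/-- Keep the monomials with exponent vector congruent to `r` modulo `T`, replacing every exponent by
its quotient by `T`. -/
noncomputable def rootPart (T : ℕ) (r : σ →₀ ℕ) : MvPolynomial σ K →ₗ[K] MvPolynomial σ K :=
  open Classical in
  (basisMonomials σ K).constr K fun d =>
    if ∀ i, d i % T = r i then monomial (d.mapRange (· / T) (Nat.zero_div T)) 1 else 0

open Classical in
theorem rootPart_monomial (T : ℕ) (r d : σ →₀ ℕ) (c : K) :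
    rootPart T r (monomial d c) =
      if ∀ i, d i % T = r i then monomial (d.mapRange (· / T) (Nat.zero_div T)) c else 0 := by
  have h : monomial d c = c • basisMonomials σ K d := by
    rw [coe_basisMonomials, smul_monomial, smul_eq_mul, mul_one]
  rw [h, map_smul, rootPart, Module.Basis.constr_basis]
  split_ifs
  · rw [smul_monomial, smul_eq_mul, mul_one]
  · rw [smul_zero]

theorem rootPart_expand_mul {T : ℕ} (hT : 0 < T) (r : σ →₀ ℕ) (p q : MvPolynomial σ K) :
    rootPart T r (expand T p * q) = p * rootPart T r q := by
  induction p using MvPolynomial.induction_on' with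
  | add p₁ p₂ h₁ h₂ => rw [map_add, add_mul, map_add, h₁, h₂, add_mul]
  | monomial a c =>
    induction q using MvPolynomial.induction_on' with
    | add q₁ q₂ h₁ h₂ => rw [mul_add, map_add, h₁, h₂, map_add, mul_add]
    | monomial d e =>
      classical
      rw [expand_monomial, monomial_mul, rootPart_monomial, rootPart_monomial]
      have h1 : ∀ i, (T • a + d) i % T = d i % T := fun i => by simp
      simp only [h1]
      split_ifs
      · rw [monomial_mul]
        congr 2
        ext i
        simp [Nat.mul_add_div hT]
      · rw [mul_zero]

theorem rootPart_expand {T : ℕ} (hT : 0 < T) (p : MvPolynomial σ K) :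
    rootPart T 0 (expand T p) = p := by
  have h := rootPart_expand_mul hT 0 p 1
  have h1 : rootPart T 0 (1 : MvPolynomial σ K) = 1 := by
    classical
    rw [← C_1, ← monomial_zero', rootPart_monomial]
    simp
  rwa [mul_one, h1, mul_one] at h

theorem sum_monomial_mul_expand_rootPart [Fintype σ] [DecidableEq σ] {T : ℕ}
    (hT : 0 < T) (p : MvPolynomial σ K) :
    ∑ r : σ → Fin T, monomial (Finsupp.equivFunOnFinite.symm fun i => (r i : ℕ)) 1 *
      expand T (rootPart T (Finsupp.equivFunOnFinite.symm fun i => (r i : ℕ)) p) = p := by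
  induction p using MvPolynomial.induction_on' with
  | add p q hp hq => simp only [map_add, mul_add, Finset.sum_add_distrib, hp, hq]
  | monomial d c =>
    rw [Finset.sum_eq_single fun i => (⟨d i % T, Nat.mod_lt _ hT⟩ : Fin T)]
    · rw [rootPart_monomial, if_pos (by simp), expand_monomial, monomial_mul, one_mul]
      congr 2
      ext i
      simp [Nat.mod_add_div]
    · intro r _ hr
      rw [rootPart_monomial, if_neg, map_zero, mul_zero]
      intro h
      exact hr (funext fun i => Fin.ext (by simpa using (h i).symm))
    · exact fun h => absurd (Finset.mem_univ _) h

theorem expand_preservesProjectiveObjects [Fintype σ] [DecidableEq σ] {T : ℕ} (hT : 0 < T) :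
    (ModuleCat.restrictScalars.{0}
      (expand T :
        MvPolynomial σ K →ₐ[K] MvPolynomial σ K).toRingHom).PreservesProjectiveObjects := by
  apply restrictScalars_preservesProjectiveObjects
  set M := (ModuleCat.restrictScalars.{0}
    (expand T : MvPolynomial σ K →ₐ[K] MvPolynomial σ K).toRingHom).obj
      (ModuleCat.of (MvPolynomial σ K) (MvPolynomial σ K))
  let i : M →ₗ[MvPolynomial σ K] ((σ → Fin T) → MvPolynomial σ K) :=
    { toFun := fun p r => rootPart T (Finsupp.equivFunOnFinite.symm fun i => (r i : ℕ))
        (p : MvPolynomial σ K)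
      map_add' := fun p q => funext fun r => map_add (rootPart T _) (p : MvPolynomial σ K) q
      map_smul' := fun p q => funext fun r => rootPart_expand_mul hT _ p q }
  let s : ((σ → Fin T) → MvPolynomial σ K) →ₗ[MvPolynomial σ K] M :=
    { toFun := fun g => (∑ r : σ → Fin T,
        monomial (Finsupp.equivFunOnFinite.symm fun i => (r i : ℕ)) 1 * expand T (g r) :
          MvPolynomial σ K)
      map_add' := fun g h => by
        change (∑ r : σ → Fin T, monomial _ 1 * expand T (g r + h r) : MvPolynomial σ K) =
          (∑ r : σ → Fin T, _ : MvPolynomial σ K) + (∑ r : σ → Fin T, _ : MvPolynomial σ K)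
        simp only [map_add, mul_add, Finset.sum_add_distrib]
      map_smul' := fun p g => by
        change (∑ r : σ → Fin T, monomial _ 1 * expand T (p * g r) : MvPolynomial σ K) =
          expand T p * (∑ r : σ → Fin T, _ : MvPolynomial σ K)
        rw [Finset.mul_sum]
        exact Finset.sum_congr rfl fun r _ => by rw [map_mul]; ring }
  exact Module.Projective.of_split i s
    (LinearMap.ext fun p => sum_monomial_mul_expand_rootPart hT (p : MvPolynomial σ K))

end Expand

section Retraction
open CategoryTheory Limits Abelian

variable {R : Type} [CommRing R]

/-- The map `R ⧸ I ⟶ R ⧸ J` induced by a ring endomorphism `φ`, linear along `φ`. -/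
noncomputable def quotToRestrictScalars (φ : R →+* R) (I J : Ideal R) (h : ∀ x ∈ I, φ x ∈ J) :
    ModuleCat.of R (R ⧸ I) ⟶
      (ModuleCat.restrictScalars.{0} φ).obj (ModuleCat.of R (R ⧸ J)) :=
  ModuleCat.ofHom (Y := ((ModuleCat.restrictScalars.{0} φ).obj (ModuleCat.of R (R ⧸ J)) :))
    { toFun := fun x => Ideal.quotientMap J φ h x
      map_add' := fun x y => map_add _ x y
      map_smul' := fun r x => by
        obtain ⟨x, rfl⟩ := Ideal.Quotient.mk_surjective x
        change Ideal.Quotient.mk J (φ (r * x)) = Ideal.Quotient.mk J (φ r * φ x)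
        rw [map_mul] }

/-- The map `R ⧸ I ⟶ R ⧸ I` induced by an additive endomorphism `π` which is linear along `φ`. -/
noncomputable def restrictScalarsToQuot (φ : R →+* R) (π : R →+ R) (I : Ideal R)
    (hI : ∀ x ∈ I, π x ∈ I) (hπ : ∀ r x, π (φ r * x) = r * π x) :
    (ModuleCat.restrictScalars.{0} φ).obj (ModuleCat.of R (R ⧸ I)) ⟶ ModuleCat.of R (R ⧸ I) :=
  ModuleCat.ofHom (X := ((ModuleCat.restrictScalars.{0} φ).obj (ModuleCat.of R (R ⧸ I)) :))
    { toFun := fun x => QuotientAddGroup.map I.toAddSubgroup I.toAddSubgroup π hI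
        (x : R ⧸ I)
      map_add' := fun x y => map_add _ (x : R ⧸ I) y
      map_smul' := fun r x => by
        obtain ⟨x, rfl⟩ := Ideal.Quotient.mk_surjective (I := I) x
        change Ideal.Quotient.mk I (π (φ r * x)) = Ideal.Quotient.mk I (r * π x)
        rw [hπ] }

theorem ExtKills.of_retraction (φ : R →+* R) (π : R →+ R) {I J : Ideal R} {s : ℕ}
    [(ModuleCat.restrictScalars.{0} φ).PreservesProjectiveObjects]
    (hI : ∀ x ∈ I, π x ∈ I) (hπ : ∀ r x, π (φ r * x) = r * π x) (hφπ : ∀ x, π (φ x) = x)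
    (hIJ : ∀ x ∈ I, φ x ∈ J) (hJI : ∀ x ∈ J, 1 * x ∈ I) (hk : ExtKills (quotMul J I 1 hJI) s) :
    ExtKills (𝟙 (ModuleCat.of R (R ⧸ I))) s := by
  have key : quotToRestrictScalars φ I J hIJ ≫
      (ModuleCat.restrictScalars.{0} φ).map (quotMul J I 1 hJI) ≫
      restrictScalarsToQuot φ π I hI hπ = 𝟙 _ := by
    refine ModuleCat.hom_ext (LinearMap.ext fun x => ?_)
    obtain ⟨x, rfl⟩ := Ideal.Quotient.mk_surjective x
    change Ideal.Quotient.mk I (π (1 * φ x)) = Ideal.Quotient.mk I x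
    rw [one_mul, hφπ]
  rw [← key]
  exact ((hk.map (ModuleCat.restrictScalars.{0} φ)).postcomp _).precomp _

end Retraction

section StanleyReisner
open CategoryTheory Limits Abelian MvPolynomial

variable {σ : Type} (K : Type) [Field K]

/-- The Stanley–Reisner ideal of the complex with faces the sets satisfying `Δ`, for `Δ` antitone:
it consists of the polynomials whose monomials are all supported on non-faces. -/
def srIdeal (Δ : Set σ → Prop) : Ideal (MvPolynomial σ K) where
  carrier := {p | ∀ m ∈ p.support, ∃ E ⊆ (m.support : Set σ), ¬ Δ E}
  zero_mem' := by simp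
  add_mem' {p q} hp hq := by
    classical
    intro m hm
    rcases Finset.mem_union.1 (support_add hm) with h | h
    exacts [hp m h, hq m h]
  smul_mem' r p hp := by
    classical
    intro m hm
    obtain ⟨a, _, b, hb, rfl⟩ := Finset.mem_add.1 (support_mul r p hm)
    obtain ⟨E, hE, hΔ⟩ := hp b hb
    refine ⟨E, fun i hi => ?_, hΔ⟩
    have := hE hi
    simp only [Finset.mem_coe, Finsupp.mem_support_iff, Finsupp.add_apply] at this ⊢
    omega

/-- The Stanley–Reisner ring as a module over the polynomial ring. -/
noncomputable abbrev srModule (Δ : Set σ → Prop) : ModuleCat.{0} (MvPolynomial σ K) :=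
  ModuleCat.of (MvPolynomial σ K) (MvPolynomial σ K ⧸ srIdeal K Δ)

variable {K}

theorem mem_srIdeal {Δ : Set σ → Prop} (hΔ : Antitone Δ) {p : MvPolynomial σ K} :
    p ∈ srIdeal K Δ ↔ ∀ m ∈ p.support, ¬ Δ (m.support : Set σ) := by
  refine forall₂_congr fun m _ => ⟨?_, fun h => ⟨_, subset_rfl, h⟩⟩
  rintro ⟨E, hE, h⟩ h'
  exact h (hΔ hE h')

theorem monomial_mem_srIdeal {Δ : Set σ → Prop} (hΔ : Antitone Δ) {m : σ →₀ ℕ}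
    (hm : ¬ Δ (m.support : Set σ)) (c : K) : monomial m c ∈ srIdeal K Δ := by
  classical
  rw [mem_srIdeal hΔ]
  intro m' hm'
  rw [Finset.mem_singleton.1 (support_monomial_subset hm')]
  exact hm

theorem srIdeal_le_iff {Δ : Set σ → Prop} (hΔ : Antitone Δ) {J : Ideal (MvPolynomial σ K)} :
    srIdeal K Δ ≤ J ↔ ∀ m : σ →₀ ℕ, ¬ Δ (m.support : Set σ) → monomial m 1 ∈ J := by
  refine ⟨fun h m hm => h (monomial_mem_srIdeal hΔ hm 1), fun h p hp => ?_⟩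
  rw [mem_srIdeal hΔ] at hp
  rw [p.as_sum]
  refine J.sum_mem fun m hm => ?_
  rw [← mul_one (coeff m p), ← smul_eq_mul, ← smul_monomial, smul_eq_C_mul]
  exact J.mul_mem_left _ (h m (hp m hm))

theorem rootPart_mem_srIdeal {T : ℕ} (hT : 0 < T) {Δ : Set σ → Prop} (hΔ : Antitone Δ)
    {p : MvPolynomial σ K} (hp : p ∈ srIdeal K Δ) : rootPart T 0 p ∈ srIdeal K Δ := by
  classical
  rw [mem_srIdeal hΔ] at hp
  rw [p.as_sum, map_sum]
  refine Ideal.sum_mem _ fun m hm => ?_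
  rw [rootPart_monomial]
  split_ifs with h
  · apply monomial_mem_srIdeal hΔ
    convert hp m hm using 3
    ext i
    simp only [Finsupp.mem_support_iff, Finsupp.mapRange_apply]
    have := Nat.div_add_mod (m i) T
    rw [h i] at this
    simp only [Finsupp.coe_zero, Pi.zero_apply, add_zero] at this
    rw [← this]
    simp [hT.ne']
  · exact zero_mem _

theorem expand_mem_pow_srIdeal (T : ℕ) {Δ : Set σ → Prop} (hΔ : Antitone Δ)
    {p : MvPolynomial σ K} (hp : p ∈ srIdeal K Δ) : expand T p ∈ srIdeal K Δ ^ T := by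
  rw [mem_srIdeal hΔ] at hp
  rw [p.as_sum, map_sum]
  refine Ideal.sum_mem _ fun m hm => ?_
  rw [← mul_one (coeff m p), ← smul_eq_mul, ← smul_monomial, map_smul, smul_eq_C_mul]
  refine Ideal.mul_mem_left _ _ ?_
  have : expand T (monomial m (1 : K)) = monomial m 1 ^ T := by
    rw [expand_monomial, monomial_pow, one_pow]
  rw [this]
  exact Ideal.pow_mem_pow (monomial_mem_srIdeal hΔ (hp m hm) 1) T

/-- Lyubeznik's inequality: the projective dimension of a Stanley–Reisner ring is at most the
number of elements generating its ideal up to radical. -/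
theorem hasProjectiveDimensionLT_of_radical_eq [Fintype σ] [DecidableEq σ] {Δ : Set σ → Prop}
    (hΔ : Antitone Δ) {s : ℕ} (f : Fin s → MvPolynomial σ K)
    (hf : (Ideal.span (Set.range f)).radical = (srIdeal K Δ).radical) :
    HasProjectiveDimensionLT (srModule K Δ) (s + 1) := by
  obtain ⟨b, hb⟩ := Ideal.exists_pow_le_of_le_radical_of_fg (I := Ideal.span (Set.range f))
    (J := srIdeal K Δ) (hf ▸ Ideal.le_radical) (IsNoetherian.noetherian _)
  obtain ⟨c, hc⟩ := Ideal.exists_pow_le_of_le_radical_of_fg (I := srIdeal K Δ)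
    (J := Ideal.span (Set.range f)) (hf ▸ Ideal.le_radical) (IsNoetherian.noetherian _)
  obtain ⟨J, ⟨e, he⟩, hJI, hk⟩ := exists_extKills_of_pow_le f (srIdeal K Δ) ⟨b, hb⟩
  have hT : 0 < c * e + 1 := by omega
  have hIJ : srIdeal K Δ ^ (c * e + 1) ≤ J := by
    refine (Ideal.pow_le_pow_right (by omega : c * e ≤ c * e + 1)).trans ?_
    rw [pow_mul]
    exact (Ideal.pow_right_mono hc e).trans he
  have := expand_preservesProjectiveObjects (σ := σ) (K := K) hT
  exact (hk.of_retraction _ (rootPart (c * e + 1) 0).toAddMonoidHom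
    (fun x hx => rootPart_mem_srIdeal hT hΔ hx) (fun r x => rootPart_expand_mul hT 0 r x)
    (fun x => rootPart_expand hT x) (fun x hx => hIJ (expand_mem_pow_srIdeal _ hΔ hx))
    hJI).hasProjectiveDimensionLT

end StanleyReisner

section StanleyReisnerSequences
open CategoryTheory Limits Abelian MvPolynomial

variable {σ : Type} {K : Type} [Field K]

theorem X_mul_mem_srIdeal {Δ : Set σ → Prop} (hΔ : Antitone Δ) (v : σ) (p : MvPolynomial σ K) :
    X v * p ∈ srIdeal K Δ ↔ p ∈ srIdeal K fun F => Δ (insert v F) := by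
  classical
  have hΔ' : Antitone fun F => Δ (insert v F) := fun A B h => hΔ (Set.insert_subset_insert h)
  rw [mem_srIdeal hΔ, mem_srIdeal hΔ', support_X_mul]
  simp only [Finset.mem_map, addLeftEmbedding_apply, forall_exists_index, and_imp,
    forall_apply_eq_imp_iff₂]
  refine forall₂_congr fun m _ => ?_
  have : ((Finsupp.single v 1 + m).support : Set σ) = insert v (m.support : Set σ) := by
    ext i
    by_cases h : i = v
    · simp [h]
    · simp [h]
  rw [this]

theorem srIdeal_inter {Δ Δ' : Set σ → Prop} (hΔ : Antitone Δ) (hΔ' : Antitone Δ') :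
    srIdeal K (fun F => Δ F ∧ Δ' F) = srIdeal K Δ ⊔ srIdeal K Δ' := by
  apply le_antisymm
  · rw [srIdeal_le_iff fun A B h => and_imp.2 fun a b => ⟨hΔ h a, hΔ' h b⟩]
    intro m hm
    rcases not_and_or.1 hm with hm | hm
    · exact Ideal.mem_sup_left (monomial_mem_srIdeal hΔ hm 1)
    · exact Ideal.mem_sup_right (monomial_mem_srIdeal hΔ' hm 1)
  · refine sup_le (fun p hp m hm => ?_) (fun p hp m hm => ?_) <;>
    · obtain ⟨E, hE, h⟩ := hp m hm
      exact ⟨E, hE, by tauto⟩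

theorem srIdeal_union {Δ Δ' : Set σ → Prop} (hΔ : Antitone Δ) (hΔ' : Antitone Δ') :
    srIdeal K (fun F => Δ F ∨ Δ' F) = srIdeal K Δ ⊓ srIdeal K Δ' := by
  ext p
  rw [Ideal.mem_inf, mem_srIdeal hΔ, mem_srIdeal hΔ',
    mem_srIdeal fun A B h => Or.imp (hΔ h) (hΔ' h)]
  simp only [not_or, forall_and]

theorem srIdeal_notMem (v : σ) : srIdeal K (fun F => v ∉ F) = Ideal.span {X v} := by
  apply le_antisymm
  · rw [srIdeal_le_iff fun A B h hB hA => hB (h hA)]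
    intro m hm
    rw [Ideal.mem_span_singleton, X_dvd_monomial]
    simp only [Finset.mem_coe, Finsupp.mem_support_iff, not_not] at hm
    exact Or.inr hm
  · rw [Ideal.span_singleton_le_iff_mem, mem_srIdeal fun A B h hB hA => hB (h hA)]
    intro m hm
    classical
    rw [Finset.mem_singleton.1 (support_monomial_subset (R := K) (a := 1) hm)]
    simp

theorem srIdeal_true : srIdeal K (fun _ : Set σ => True) = ⊥ := by
  rw [eq_bot_iff, srIdeal_le_iff antitone_const]
  simp

theorem srIdeal_false : srIdeal K (fun _ : Set σ => False) = ⊤ := by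
  rw [Ideal.eq_top_iff_one]
  exact monomial_mem_srIdeal antitone_const (m := 0) (by simp) 1

theorem antitone_insert {Δ : Set σ → Prop} (hΔ : Antitone Δ) (v : σ) :
    Antitone fun F => Δ (insert v F) :=
  fun _ _ h => hΔ (Set.insert_subset_insert h)

theorem antitone_and {Δ Δ' : Set σ → Prop} (hΔ : Antitone Δ) (hΔ' : Antitone Δ') :
    Antitone fun F => Δ F ∧ Δ' F :=
  fun _ _ h => And.imp (hΔ h) (hΔ' h)

theorem antitone_notMem (v : σ) : Antitone fun F : Set σ => v ∉ F :=
  fun _ _ h hB hA => hB (h hA)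

variable (K) in
/-- The short exact sequence relating star, complex and deletion of a vertex. -/
noncomputable def starDelComplex {Δ : Set σ → Prop} (hΔ : Antitone Δ) (v : σ) :
    ShortComplex (ModuleCat (MvPolynomial σ K)) :=
  colonComplex (srIdeal K fun F => Δ (insert v F)) (srIdeal K Δ)
    (srIdeal K fun F => Δ F ∧ v ∉ F) (X v) (X_mul_mem_srIdeal hΔ v)
    (by rw [srIdeal_inter hΔ (antitone_notMem v), srIdeal_notMem])

theorem starDelComplex_shortExact {Δ : Set σ → Prop} (hΔ : Antitone Δ) (v : σ) :
    (starDelComplex K hΔ v).ShortExact :=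
  colonComplex_shortExact _ _ _ _ _ _

variable (K) in
/-- The projective dimension of the Stanley–Reisner ring is at most `d`. -/
def SRPdLE (Δ : Set σ → Prop) (d : ℕ) : Prop :=
  HasProjectiveDimensionLT (srModule K Δ) (d + 1)

namespace SRPdLE

theorem mono {Δ : Set σ → Prop} {d e : ℕ} (h : SRPdLE K Δ d) (hde : d ≤ e) : SRPdLE K Δ e :=
  haveI : HasProjectiveDimensionLT (srModule K Δ) (d + 1) := h
  hasProjectiveDimensionLT_of_ge _ (d + 1) _ (by omega)

theorem true : SRPdLE K (fun _ : Set σ => True) 0 := by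
  have : Module.Free (MvPolynomial σ K) (MvPolynomial σ K ⧸ srIdeal K fun _ : Set σ => True) :=
    Module.Free.of_equiv (Submodule.quotEquivOfEqBot _ srIdeal_true).symm
  exact projective_iff_hasProjectiveDimensionLT_one.1
    (inferInstance : Projective (srModule K fun _ : Set σ => True))

theorem of_forall_not {Δ : Set σ → Prop} (h : ∀ F, ¬ Δ F) (d : ℕ) : SRPdLE K Δ d := by
  obtain rfl : Δ = fun _ => False := funext fun F => eq_false (h F)
  have : Subsingleton (srModule K fun _ : Set σ => False) :=
    Ideal.Quotient.subsingleton_iff.2 srIdeal_false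
  have := (ModuleCat.isZero_of_subsingleton
    (srModule K fun _ : Set σ => False)).hasProjectiveDimensionLT_zero
  exact hasProjectiveDimensionLT_of_ge _ 0 _ (by omega)

theorem of_star_del {Δ : Set σ → Prop} (hΔ : Antitone Δ) (v : σ) {d : ℕ}
    (h₁ : SRPdLE K (fun F => Δ (insert v F)) d) (h₂ : SRPdLE K (fun F => Δ F ∧ v ∉ F) d) :
    SRPdLE K Δ d :=
  (starDelComplex_shortExact (K := K) hΔ v).hasProjectiveDimensionLT_X₂ _ h₁ h₂

theorem del_of_cone {Δ : Set σ → Prop} (hΔ : Antitone Δ) {v : σ} (hv : ∀ F, Δ F → Δ (insert v F))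
    {d : ℕ} (h : SRPdLE K Δ d) : SRPdLE K (fun F => Δ F ∧ v ∉ F) (d + 1) := by
  have e : (fun F => Δ (insert v F)) = Δ :=
    funext fun F => propext ⟨hΔ (Set.subset_insert v F), hv F⟩
  have h' := h
  rw [← e] at h'
  exact (starDelComplex_shortExact (K := K) hΔ v).hasProjectiveDimensionLT_X₃ _ h'
    (h.mono (Nat.le_succ d))

end SRPdLE

variable (K) in
/-- The ideal of the point whose coordinates are `1` on `S` and `0` elsewhere. -/
noncomputable def pointIdeal (S : Set σ) : Ideal (MvPolynomial σ K) :=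
  RingHom.ker (aeval (S.indicator fun _ => (1 : K)))

variable (K) in
/-- The residue field at the point whose coordinates are `1` on `S` and `0` elsewhere. -/
noncomputable abbrev pointModule (S : Set σ) : ModuleCat.{0} (MvPolynomial σ K) :=
  ModuleCat.of (MvPolynomial σ K) (MvPolynomial σ K ⧸ pointIdeal K S)

theorem X_smul_id_pointModule_of_mem {S : Set σ} {v : σ} (hv : v ∈ S) :
    (X v : MvPolynomial σ K) • 𝟙 (pointModule K S) = 𝟙 _ := by
  refine ModuleCat.hom_ext (LinearMap.ext fun x => ?_)
  obtain ⟨x, rfl⟩ := Ideal.Quotient.mk_surjective x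
  change Ideal.Quotient.mk (pointIdeal K S) (X v * x) = Ideal.Quotient.mk (pointIdeal K S) x
  rw [Ideal.Quotient.eq, pointIdeal, RingHom.mem_ker]
  simp [hv]

theorem X_smul_id_pointModule_of_notMem {S : Set σ} {v : σ} (hv : v ∉ S) :
    (X v : MvPolynomial σ K) • 𝟙 (pointModule K S) = 0 := by
  refine ModuleCat.hom_ext (LinearMap.ext fun x => ?_)
  obtain ⟨x, rfl⟩ := Ideal.Quotient.mk_surjective x
  change Ideal.Quotient.mk (pointIdeal K S) (X v * x) = 0
  rw [Ideal.Quotient.eq_zero_iff_mem, pointIdeal, RingHom.mem_ker]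
  simp [hv]

theorem quotMul_comp_ext {R : Type} [CommRing R] {A : Ideal R} {M : ModuleCat.{0} R} {s : ℕ}
    (r : R) (h : ∀ x ∈ A, r * x ∈ A) (α : Ext (ModuleCat.of R (R ⧸ A)) M s) :
    (Ext.mk₀ (quotMul A A r h)).comp α (zero_add s) =
      α.comp (Ext.mk₀ (r • 𝟙 M)) (add_zero s) := by
  have : quotMul A A r h = r • 𝟙 _ := by
    refine ModuleCat.hom_ext (LinearMap.ext fun x => ?_)
    obtain ⟨x, rfl⟩ := Ideal.Quotient.mk_surjective x
    rfl
  rw [this, Ext.mk₀_smul, Ext.mk₀_smul, Ext.smul_comp, Ext.comp_smul, Ext.mk₀_id_comp,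
    Ext.comp_mk₀_id]

variable (K) in
/-- `Ext^s` from the Stanley–Reisner ring of `Δ` to the residue field at the indicator of `S` does
not vanish. -/
def SRExt (Δ : Set σ → Prop) (S : Set σ) (s : ℕ) : Prop :=
  ∃ α : Ext (srModule K Δ) (pointModule K S) s, α ≠ 0

namespace SRExt

theorem not_SRPdLE {Δ : Set σ → Prop} {S : Set σ} {s d : ℕ} (h : SRExt K Δ S s) (hd : d < s) :
    ¬ SRPdLE K Δ d := by
  intro h'
  obtain ⟨α, hα⟩ := h
  have : HasProjectiveDimensionLT (srModule K Δ) (d + 1) := h'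
  exact hα (α.eq_zero_of_hasProjectiveDimensionLT (d + 1) hd)

theorem true (S : Set σ) : SRExt K (fun _ : Set σ => True) S 0 := by
  refine ⟨Ext.mk₀ (quotMul _ _ 1 fun x hx => ?_), fun h => ?_⟩
  · rw [srIdeal_true, Ideal.mem_bot] at hx
    simp [hx]
  · have h0 := (Ext.mk₀_bijective _ _).1 (h.trans (Ext.mk₀_zero _ _).symm)
    have h1 : Ideal.Quotient.mk (pointIdeal K S) (1 * 1) = 0 :=
      congrArg (fun g => g.hom (Ideal.Quotient.mk _ 1)) h0
    rw [mul_one, Ideal.Quotient.eq_zero_iff_mem, pointIdeal, RingHom.mem_ker, map_one] at h1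
    exact one_ne_zero h1

theorem of_star {Δ : Set σ → Prop} (hΔ : Antitone Δ) {S : Set σ} {v : σ} (hv : v ∈ S) {s : ℕ}
    (h : SRExt K (fun F => Δ (insert v F)) S s) : SRExt K Δ S s := by
  obtain ⟨α, hα⟩ := h
  have h₁ : ∀ x ∈ srIdeal K Δ, 1 * x ∈ srIdeal K fun F => Δ (insert v F) := fun x hx => by
    rw [one_mul, ← X_mul_mem_srIdeal hΔ]
    exact Ideal.mul_mem_left _ _ hx
  refine ⟨(Ext.mk₀ (quotMul _ _ 1 h₁)).comp α (zero_add s), fun h0 => hα ?_⟩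
  have := congrArg (fun β => (Ext.mk₀ (quotMul _ _ (X v)
    fun x hx => (X_mul_mem_srIdeal hΔ v x).2 hx)).comp β (zero_add s)) h0
  beta_reduce at this
  rw [Ext.mk₀_comp_mk₀_assoc, quotMul_comp, Ext.comp_zero, quotMul_comp_ext, one_mul,
    X_smul_id_pointModule_of_mem hv, Ext.comp_mk₀_id] at this
  exact this

theorem del_of_cone {Δ : Set σ → Prop} (hΔ : Antitone Δ) {S : Set σ} {v : σ}
    (hv : ∀ F, Δ F → Δ (insert v F)) (hvS : v ∉ S) {s : ℕ} (h : SRExt K Δ S s) :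
    SRExt K (fun F => Δ F ∧ v ∉ F) S (s + 1) := by
  have e : (fun F => Δ (insert v F)) = Δ :=
    funext fun F => propext ⟨hΔ (Set.subset_insert v F), hv F⟩
  obtain ⟨α, hα⟩ := h
  have hA : ∀ x, X v * x ∈ srIdeal K Δ ↔ x ∈ srIdeal K Δ := fun x => by
    rw [X_mul_mem_srIdeal hΔ, e]
  have hS := colonComplex_shortExact (srIdeal K Δ) (srIdeal K Δ)
    (srIdeal K fun F => Δ F ∧ v ∉ F) (X v) hA
    (by rw [srIdeal_inter hΔ (antitone_notMem v), srIdeal_notMem])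
  refine ⟨hS.extClass.comp α (add_comm 1 s), fun h0 => hα ?_⟩
  obtain ⟨β, rfl⟩ := Ext.contravariant_sequence_exact₁ hS _ α (add_comm 1 s) h0
  refine (quotMul_comp_ext (X v) (fun x hx => (hA x).2 hx) β).trans ?_
  rw [X_smul_id_pointModule_of_notMem hvS, Ext.mk₀_zero]
  exact Ext.comp_zero β _ _ _ _

end SRExt

section MayerVietoris
variable {R : Type} [CommRing R]

/-- The complex `R ⧸ A ⊓ B ⟶ R ⧸ A × R ⧸ B ⟶ R ⧸ A ⊔ B`. -/
noncomputable def infSupComplex (A B : Ideal R) : ShortComplex (ModuleCat R) :=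
  ShortComplex.mk
    (ModuleCat.ofHom (Y := (R ⧸ A) × (R ⧸ B)) ((Submodule.factor inf_le_left).prod
      (Submodule.factor (p := A ⊓ B) inf_le_right)))
    (ModuleCat.ofHom (Y := R ⧸ A ⊔ B)
      ((Submodule.factor le_sup_left).coprod (-Submodule.factor le_sup_right))) (by
      refine ModuleCat.hom_ext (LinearMap.ext fun x => ?_)
      obtain ⟨x, rfl⟩ := Ideal.Quotient.mk_surjective x
      change Ideal.Quotient.mk (A ⊔ B) x + -Ideal.Quotient.mk (A ⊔ B) x = 0
      exact add_neg_cancel _)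

theorem infSupComplex_shortExact (A B : Ideal R) : (infSupComplex A B).ShortExact := by
  refine { exact := ?_, mono_f := ?_, epi_g := ?_ }
  · rw [ShortComplex.moduleCat_exact_iff]
    rintro ⟨x, y⟩ h
    obtain ⟨x, rfl⟩ := Ideal.Quotient.mk_surjective x
    obtain ⟨y, rfl⟩ := Ideal.Quotient.mk_surjective y
    have h' : Ideal.Quotient.mk (A ⊔ B) x + -Ideal.Quotient.mk (A ⊔ B) y = 0 := h
    rw [← sub_eq_add_neg, sub_eq_zero, Ideal.Quotient.eq, Submodule.mem_sup] at h'
    obtain ⟨a, ha, b, hb, hab⟩ := h'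
    refine ⟨Ideal.Quotient.mk (A ⊓ B) (x - a), ?_⟩
    change ((Ideal.Quotient.mk A (x - a), Ideal.Quotient.mk B (x - a)) : (R ⧸ A) × (R ⧸ B)) =
      (Ideal.Quotient.mk A x, Ideal.Quotient.mk B y)
    refine Prod.ext (Ideal.Quotient.eq.2 ?_) (Ideal.Quotient.eq.2 ?_)
    · simpa using ha
    · convert hb using 1
      linear_combination -hab
  · rw [ModuleCat.mono_iff_injective, injective_iff_map_eq_zero]
    intro x hx
    obtain ⟨x, rfl⟩ := Ideal.Quotient.mk_surjective x
    have h' : ((Ideal.Quotient.mk A x, Ideal.Quotient.mk B x) : (R ⧸ A) × (R ⧸ B)) = 0 := hx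
    exact Ideal.Quotient.eq_zero_iff_mem.2 ⟨Ideal.Quotient.eq_zero_iff_mem.1 (congrArg Prod.fst h'),
      Ideal.Quotient.eq_zero_iff_mem.1 (congrArg Prod.snd h')⟩
  · rw [ModuleCat.epi_iff_surjective]
    intro y
    obtain ⟨y, rfl⟩ := Ideal.Quotient.mk_surjective y
    refine ⟨(Ideal.Quotient.mk A y, 0), ?_⟩
    change Ideal.Quotient.mk (A ⊔ B) y + -(0 : R ⧸ A ⊔ B) = Ideal.Quotient.mk (A ⊔ B) y
    rw [neg_zero, add_zero]

theorem hasProjectiveDimensionLT_prod {M N : ModuleCat.{0} R} {d : ℕ}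
    (hM : HasProjectiveDimensionLT M d) (hN : HasProjectiveDimensionLT N d) :
    HasProjectiveDimensionLT (ModuleCat.of R (M × N)) d := by
  have hS : (ShortComplex.mk (ModuleCat.ofHom (LinearMap.inl R M N))
      (ModuleCat.ofHom (LinearMap.snd R M N)) (by
        exact ModuleCat.hom_ext (LinearMap.snd_comp_inl R M N))).ShortExact := by
    refine { exact := ?_, mono_f := ?_, epi_g := ?_ }
    · rw [ShortComplex.moduleCat_exact_iff]
      rintro ⟨x, y⟩ (h : y = 0)
      exact ⟨x, Prod.ext rfl h.symm⟩
    · rw [ModuleCat.mono_iff_injective]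
      exact LinearMap.inl_injective
    · rw [ModuleCat.epi_iff_surjective]
      exact LinearMap.snd_surjective
  exact hS.hasProjectiveDimensionLT_X₂ _ hM hN

end MayerVietoris

theorem SRExt.union {Δ Δ' : Set σ → Prop} (hΔ : Antitone Δ) (hΔ' : Antitone Δ') {S : Set σ}
    {d : ℕ} (h : SRExt K (fun F => Δ F ∧ Δ' F) S (d + 1)) (h₁ : SRPdLE K Δ d)
    (h₂ : SRPdLE K Δ' d) : SRExt K (fun F => Δ F ∨ Δ' F) S d := by
  unfold SRExt srModule at h ⊢
  rw [srIdeal_inter hΔ hΔ'] at h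
  rw [srIdeal_union hΔ hΔ']
  have hS := infSupComplex_shortExact (srIdeal K Δ) (srIdeal K Δ')
  obtain ⟨α, hα⟩ := h
  have : HasProjectiveDimensionLT (infSupComplex (srIdeal K Δ) (srIdeal K Δ')).X₂ (d + 1) :=
    hasProjectiveDimensionLT_prod h₁ h₂
  obtain ⟨β, hβ⟩ := Ext.contravariant_sequence_exact₃ hS _ α
    (Ext.eq_zero_of_hasProjectiveDimensionLT _ (d + 1) le_rfl) (add_comm 1 d)
  refine ⟨β, fun h0 => hα ?_⟩
  rw [← hβ, h0]
  exact Ext.comp_zero hS.extClass _ _ _ _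

end StanleyReisnerSequences

section ChainIndep

variable {σ : Type}

/-- No two consecutive entries of the list `l` both lie in `F`. -/
def ChainIndep (l : List σ) (F : Set σ) : Prop :=
  l.IsChain fun a b => ¬ (a ∈ F ∧ b ∈ F)

@[simp] theorem chainIndep_nil (F : Set σ) : ChainIndep [] F := List.isChain_nil

@[simp] theorem chainIndep_singleton (a : σ) (F : Set σ) : ChainIndep [a] F :=
  List.isChain_singleton a

@[simp] theorem chainIndep_cons_cons {a b : σ} {l : List σ} {F : Set σ} :
    ChainIndep (a :: b :: l) F ↔ ¬ (a ∈ F ∧ b ∈ F) ∧ ChainIndep (b :: l) F :=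
  List.isChain_cons_cons

theorem chainIndep_split {c : σ} {l₁ l₂ : List σ} {F : Set σ} :
    ChainIndep (l₁ ++ c :: l₂) F ↔ ChainIndep (l₁ ++ [c]) F ∧ ChainIndep (c :: l₂) F :=
  List.isChain_split

theorem chainIndep_reverse {l : List σ} {F : Set σ} :
    ChainIndep l.reverse F ↔ ChainIndep l F := by
  unfold ChainIndep
  rw [List.isChain_reverse]
  simp only [and_comm]

theorem chainIndep_antitone (l : List σ) : Antitone (ChainIndep l) :=
  fun _ _ h hB => List.IsChain.imp (fun _ _ hab hA => hab ⟨h hA.1, h hA.2⟩) hB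

theorem chainIndep_cons_of_notMem {a : σ} {l : List σ} {F : Set σ} (ha : a ∉ F) :
    ChainIndep (a :: l) F ↔ ChainIndep l F := by
  cases l <;> simp [ha]

theorem chainIndep_cons_cons_of_mem {a b : σ} {l : List σ} {F : Set σ} (ha : a ∈ F) :
    ChainIndep (a :: b :: l) F ↔ b ∉ F ∧ ChainIndep l F := by
  rw [chainIndep_cons_cons]
  simp only [ha, true_and]
  exact and_congr_right fun hb => chainIndep_cons_of_notMem hb

theorem chainIndep_concat_of_notMem {a : σ} {l : List σ} {F : Set σ} (ha : a ∉ F) :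
    ChainIndep (l ++ [a]) F ↔ ChainIndep l F := by
  rw [← chainIndep_reverse, List.reverse_append, List.reverse_singleton, List.singleton_append,
    chainIndep_cons_of_notMem ha, chainIndep_reverse]

theorem chainIndep_concat_concat_of_mem {a b : σ} {l : List σ} {F : Set σ} (ha : a ∈ F) :
    ChainIndep (l ++ [b, a]) F ↔ b ∉ F ∧ ChainIndep l F := by
  rw [← chainIndep_reverse, List.reverse_append, List.reverse_cons, List.reverse_singleton,
    List.singleton_append, List.cons_append, List.singleton_append,
    chainIndep_cons_cons_of_mem ha, chainIndep_reverse]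

theorem ChainIndep.of_concat {a : σ} {l : List σ} {F : Set σ} (h : ChainIndep (l ++ [a]) F) :
    ChainIndep l F := by
  by_cases ha : a ∈ F
  · rcases List.eq_nil_or_concat' l with rfl | ⟨l, b, rfl⟩
    · simp
    · rw [List.append_assoc, List.singleton_append, chainIndep_concat_concat_of_mem ha] at h
      exact (chainIndep_concat_of_notMem h.1).2 h.2
  · exact (chainIndep_concat_of_notMem ha).1 h

theorem ChainIndep.concat_of_concat {a u : σ} {l : List σ} {F : Set σ}
    (h : ChainIndep (l ++ [a]) F) (ha : a ∈ F) : ChainIndep (l ++ [u]) F := by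
  rcases List.eq_nil_or_concat' l with rfl | ⟨l, b, rfl⟩
  · simp
  · rw [List.append_assoc, List.singleton_append, chainIndep_concat_concat_of_mem ha] at h
    rw [List.append_assoc, List.singleton_append, chainIndep_split,
      chainIndep_concat_of_notMem h.1]
    simp [h]

theorem chainIndep_congr {l : List σ} {F F' : Set σ} (h : ∀ v ∈ l, v ∈ F ↔ v ∈ F') :
    ChainIndep l F ↔ ChainIndep l F' := by
  induction l with
  | nil => simp
  | cons a l ih =>
    have ih := ih fun v hv => h v (List.mem_cons_of_mem a hv)
    cases l with
    | nil => simp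
    | cons b l =>
      rw [chainIndep_cons_cons, chainIndep_cons_cons, ih, h a (by simp), h b (by simp)]

theorem chainIndep_insert {l : List σ} {v : σ} (hv : v ∉ l) {F : Set σ} :
    ChainIndep l (insert v F) ↔ ChainIndep l F :=
  chainIndep_congr fun w hw => by simp [show w ≠ v from fun h => hv (h ▸ hw)]

/-- The set `F` contains no element of `W`. -/
def Misses (W : Finset σ) (F : Set σ) : Prop := ∀ v ∈ W, v ∉ F

theorem misses_antitone (W : Finset σ) : Antitone (Misses W) :=
  fun _ _ h hB v hv hA => hB v hv (h hA)

theorem misses_insert_right {W : Finset σ} {v : σ} (hv : v ∉ W) {F : Set σ} :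
    Misses W (insert v F) ↔ Misses W F :=
  forall₂_congr fun w hw => by simp [show w ≠ v from fun h => hv (h ▸ hw)]

theorem antitone_misses_and_chainIndep (W : Finset σ) (l : List σ) :
    Antitone fun F => Misses W F ∧ ChainIndep l F :=
  antitone_and (misses_antitone W) (chainIndep_antitone l)

variable [DecidableEq σ]

theorem misses_insert {W : Finset σ} {v : σ} {F : Set σ} :
    Misses (insert v W) F ↔ v ∉ F ∧ Misses W F := by
  simp [Misses]

variable (K : Type) [Field K]

theorem SRPdLE.misses (W : Finset σ) : SRPdLE K (Misses W) W.card := by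
  induction W using Finset.induction_on with
  | empty =>
    have : Misses (∅ : Finset σ) = fun _ => True := by ext; simp [Misses]
    rw [this]
    exact SRPdLE.true
  | insert v W hv ih =>
    rw [Finset.card_insert_of_notMem hv]
    have := ih.del_of_cone (misses_antitone W) (v := v) fun F => (misses_insert_right hv).2
    convert this using 2 with F
    rw [misses_insert, and_comm]

theorem SRExt.misses {W : Finset σ} {S : Set σ} (h : ∀ v ∈ W, v ∉ S) :
    SRExt K (Misses W) S W.card := by
  induction W using Finset.induction_on with
  | empty =>
    have : Misses (∅ : Finset σ) = fun _ => True := by ext; simp [Misses]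
    rw [this]
    exact SRExt.true S
  | insert v W hv ih =>
    rw [Finset.card_insert_of_notMem hv]
    have := (ih fun w hw => h w (by simp [hw])).del_of_cone (misses_antitone W) (v := v)
      (fun F => (misses_insert_right hv).2) (h v (by simp))
    convert this using 2 with F
    rw [misses_insert, and_comm]

theorem SRExt.of_star_finset {Δ : Set σ → Prop} (hΔ : Antitone Δ) {S : Set σ} (T : Finset σ)
    (hT : ∀ v ∈ T, v ∈ S) {s : ℕ} (h : SRExt K (fun F => Δ (F ∪ T)) S s) : SRExt K Δ S s := by
  induction T using Finset.induction_on generalizing Δ with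
  | empty => simpa using h
  | insert v T hv ih =>
    refine SRExt.of_star hΔ (hT v (by simp)) (ih (antitone_insert hΔ v)
      (fun w hw => hT w (by simp [hw])) ?_)
    convert h using 3 with F
    rw [Finset.coe_insert, Set.union_insert]

theorem SRPdLE.misses_and_chainIndep (W : Finset σ) (l : List σ) (hl : l.Nodup)
    (hW : ∀ v ∈ l, v ∉ W) :
    SRPdLE K (fun F => Misses W F ∧ ChainIndep l F) (W.card + 2 * l.length / 3) := by
  match l with
  | [] => simpa using SRPdLE.misses K W
  | [a] => simpa using SRPdLE.misses K W
  | [a, b] =>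
    rw [show 2 * [a, b].length / 3 = 1 by simp]
    simp only [List.nodup_cons, List.mem_cons, List.not_mem_nil, or_false,
      forall_eq_or_imp, forall_eq] at hl hW
    refine SRPdLE.of_star_del (antitone_misses_and_chainIndep W [a, b]) b ?_ ?_
    · have := SRPdLE.misses K (insert a W)
      rw [Finset.card_insert_of_notMem hW.1] at this
      convert this using 2 with F
      rw [misses_insert_right hW.2, misses_insert]
      simp [hl.1, and_comm]
    · have := SRPdLE.misses K (insert b W)
      rw [Finset.card_insert_of_notMem hW.2] at this
      convert this using 2 with F
      rw [misses_insert]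
      simp
      tauto
  | a :: b :: c :: l =>
    simp only [List.nodup_cons, List.mem_cons, not_or, forall_eq_or_imp] at hl hW
    obtain ⟨⟨hab, hac, hal⟩, ⟨hbc, hbl⟩, hcl, hl⟩ := hl
    obtain ⟨haW, hbW, hcW, hW⟩ := hW
    refine SRPdLE.of_star_del (antitone_misses_and_chainIndep W _) b ?_ ?_
    · have := SRPdLE.misses_and_chainIndep (insert a (insert c W)) l hl fun v hv => by
        simp only [Finset.mem_insert, not_or]
        exact ⟨fun h => hal (h ▸ hv), fun h => hcl (h ▸ hv), hW v hv⟩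
      rw [Finset.card_insert_of_notMem (by simp [hac, haW]),
        Finset.card_insert_of_notMem hcW] at this
      convert this.mono (e := W.card + 2 * (a :: b :: c :: l).length / 3)
        (by simp only [List.length_cons]; omega) using 2 with F
      rw [misses_insert_right hbW, misses_insert, misses_insert, chainIndep_cons_cons,
        chainIndep_cons_cons_of_mem (Set.mem_insert b F), chainIndep_insert hbl]
      simp only [Set.mem_insert_iff, hab, Ne.symm hbc, false_or, true_or, and_true]
      tauto
    · have := SRPdLE.misses_and_chainIndep (insert b W) (c :: l) (by simp [hcl, hl])
        fun v hv => by
          simp only [Finset.mem_insert, not_or]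
          rcases List.mem_cons.1 hv with rfl | hv
          · exact ⟨Ne.symm hbc, hcW⟩
          · exact ⟨fun h => hbl (h ▸ hv), hW v hv⟩
      rw [Finset.card_insert_of_notMem hbW] at this
      convert this.mono (e := W.card + 2 * (a :: b :: c :: l).length / 3)
        (by simp only [List.length_cons]; omega) using 2 with F
      rw [misses_insert]
      by_cases hb : b ∈ F
      · simp [hb]
      · rw [chainIndep_cons_cons, chainIndep_cons_of_notMem hb]
        simp only [hb, and_false, not_false_eq_true, true_and]
        tauto
  termination_by l.length

end ChainIndep

section CycleExt

variable {σ : Type}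

/-- The union occurring in the induction step from a cycle of length `j` to one of length
`j + 3`. -/
theorem chainIndep_cycle_union_iff {a p q r : σ} {t : List σ} {F : Set σ} :
    ChainIndep (a :: (t ++ [r, q, p] ++ [a])) F ↔
      ((p ∉ F ∧ r ∉ F) ∧ ChainIndep (a :: t) F) ∨
      (q ∉ F ∧ ¬ (p ∈ F ∧ a ∈ F) ∧ ChainIndep (a :: (t ++ [a])) F ∧
        ChainIndep (a :: (t ++ [r])) F) := by
  have e : a :: (t ++ [r, q, p] ++ [a]) = (a :: t) ++ r :: [q, p, a] := by simp
  rw [e, chainIndep_split, ← List.cons_append, ← List.cons_append]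
  simp only [chainIndep_cons_cons, chainIndep_singleton, and_true]
  constructor
  · rintro ⟨h₁, h₂, h₃, h₄⟩
    by_cases h : ChainIndep (a :: t ++ [a]) F
    · by_cases hq : q ∈ F
      · exact Or.inl ⟨⟨fun hp => h₃ ⟨hq, hp⟩, fun hr => h₂ ⟨hr, hq⟩⟩, h₁.of_concat⟩
      · exact Or.inr ⟨hq, h₄, h, h₁⟩
    · have ha : a ∈ F := by
        by_contra ha
        exact h ((chainIndep_concat_of_notMem ha).2 h₁.of_concat)
      exact Or.inl ⟨⟨fun hp => h₄ ⟨hp, ha⟩, fun hr => h (h₁.concat_of_concat hr)⟩, h₁.of_concat⟩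
  · rintro (⟨⟨hp, hr⟩, h⟩ | ⟨hq, hpa, h, h'⟩)
    · exact ⟨(chainIndep_concat_of_notMem hr).2 h, by tauto, by tauto, by tauto⟩
    · exact ⟨h', by tauto, by tauto, by tauto⟩

variable [DecidableEq σ] (K : Type) [Field K]

theorem SRPdLE.misses_and_cycle_step {W : Finset σ} {a p q r : σ} {t : List σ} {j : ℕ}
    (hj : t.length = 3 * j) (ht : (a :: (t ++ [r, q, p])).Nodup)
    (hW : ∀ v ∈ a :: (t ++ [r, q, p]), v ∉ W) :
    SRPdLE K (fun F => Misses W F ∧ q ∉ F ∧ ¬ (p ∈ F ∧ a ∈ F) ∧ ChainIndep (a :: (t ++ [a])) F ∧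
        ChainIndep (a :: (t ++ [r])) F) (W.card + 2 * j + 3) := by
  have hΔ : Antitone (fun F => Misses W F ∧ q ∉ F ∧ ¬ (p ∈ F ∧ a ∈ F) ∧
      ChainIndep (a :: (t ++ [a])) F ∧ ChainIndep (a :: (t ++ [r])) F) := by
    refine antitone_and (misses_antitone W) (antitone_and (antitone_notMem q)
      (antitone_and (fun A B h hB hA => hB ⟨h hA.1, h hA.2⟩)
        (antitone_and (chainIndep_antitone _) (chainIndep_antitone _))))
  have hnd : (a :: (t ++ [r, q, p])).Nodup := ht
  simp only [List.nodup_cons, List.mem_append, List.mem_cons, List.not_mem_nil, or_false, not_or,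
    List.nodup_append, ne_eq, forall_eq_or_imp, forall_eq, not_false_eq_true, List.nodup_nil,
    and_true] at ht
  obtain ⟨⟨hat, har, haq, hap⟩, ht, ⟨⟨hrq, hrp⟩, hqp⟩, htd⟩ := ht
  have haW : a ∉ W := hW a (by simp)
  have hpW : p ∉ W := hW p (by simp)
  have hqW : q ∉ W := hW q (by simp)
  have hrW : r ∉ W := hW r (by simp)
  have htW : ∀ v ∈ t, v ∉ W := fun v hv => hW v (by simp [hv])
  refine SRPdLE.of_star_del hΔ a ?_ ?_
  · rcases t with _ | ⟨c, t⟩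
    · exact SRPdLE.of_forall_not (fun F hF => by simpa using hF.2.2.2.1) _
    rcases List.eq_nil_or_concat' t with rfl | ⟨t, b, rfl⟩
    · simp only [List.length_cons, List.length_nil] at hj
      omega
    simp only [List.length_cons, List.length_append, List.length_nil] at hj
    simp only [List.mem_cons, List.mem_append, List.not_mem_nil, or_false, not_or,
      List.nodup_cons, List.nodup_append, List.nodup_nil] at hat ht htd htW
    have hcb : c ≠ b := ht.1.2
    have hc : ∀ v ∈ [a, p, q, b], c ≠ v := by
      have := htd c (by simp)
      have := hat.1
      simp
      tauto
    have hb : ∀ v ∈ [a, p, q], b ≠ v := by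
      have := htd b (by simp)
      have := hat.2.2
      simp
      tauto
    have := SRPdLE.misses_and_chainIndep K (insert p (insert q (insert c (insert b W)))) t
      ht.2.1 fun v hv => by
        have h1 := htd v (by simp [hv])
        simp only [Finset.mem_insert, not_or]
        exact ⟨h1.2.2, h1.2.1, fun h => ht.1.1 (h ▸ hv), ht.2.2.2 v hv b rfl,
          htW v (by simp [hv])⟩
    rw [Finset.card_insert_of_notMem (by
        simp only [Finset.mem_insert, not_or]
        exact ⟨Ne.symm hqp, (hc p (by simp)).symm, (hb p (by simp)).symm, hpW⟩),
      Finset.card_insert_of_notMem (by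
        simp only [Finset.mem_insert, not_or]
        exact ⟨(hc q (by simp)).symm, (hb q (by simp)).symm, hqW⟩),
      Finset.card_insert_of_notMem (by
        simp only [Finset.mem_insert, not_or]
        exact ⟨hcb, htW c (by simp)⟩),
      Finset.card_insert_of_notMem (htW b (by simp))] at this
    convert this.mono (e := W.card + 2 * j + 3) (by omega) using 2 with F
    have e₁ : a :: (c :: (t ++ [b]) ++ [a]) = (a :: c :: t) ++ [b, a] := by simp
    have e₂ : a :: (c :: (t ++ [b]) ++ [r]) = (a :: c :: (t ++ [b])) ++ [r] := by simp
    have haF : a ∈ insert a F := Set.mem_insert a F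
    have hctb : a ∉ t := hat.2.1
    rw [misses_insert_right haW, e₁, chainIndep_concat_concat_of_mem haF,
      chainIndep_cons_cons_of_mem haF, chainIndep_insert hctb]
    simp only [misses_insert, Set.mem_insert_iff, true_or, and_true, Ne.symm haq, Ne.symm hap,
      false_or, (hb a (by simp)), (hc a (by simp))]
    constructor
    · rintro ⟨h₁, h₂, h₃, ⟨h₄, h₅, h₆⟩, -⟩
      exact ⟨⟨h₃, h₂, h₅, h₄, h₁⟩, h₆⟩
    · rintro ⟨⟨h₃, h₂, h₅, h₄, h₁⟩, h₆⟩
      refine ⟨h₁, h₂, h₃, ⟨h₄, h₅, h₆⟩, ?_⟩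
      have e₃ : a :: (c :: (t ++ [b]) ++ [r]) = (a :: c :: t) ++ b :: [r] := by simp
      have hbF : b ∉ insert a F := by simp [h₄, hb a]
      rw [e₃, chainIndep_split, chainIndep_concat_of_notMem hbF,
        chainIndep_cons_cons_of_mem haF, chainIndep_insert hctb, chainIndep_cons_of_notMem hbF]
      simp [h₅, h₆, hc a]
  · have := SRPdLE.misses_and_chainIndep K (insert a (insert q W)) (t ++ [r])
      (by
        simp only [List.nodup_append, ht, List.nodup_singleton, true_and, List.mem_singleton,
          forall_eq]
        exact fun v hv => (htd v hv).1) fun v hv => by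
        simp only [Finset.mem_insert, not_or]
        rcases List.mem_append.1 hv with hv | hv
        · exact ⟨fun h => hat (h ▸ hv), (htd v hv).2.1, htW v hv⟩
        · rw [List.mem_singleton.1 hv]
          exact ⟨Ne.symm har, hrq, hrW⟩
    rw [Finset.card_insert_of_notMem (by simp [haq, haW]),
      Finset.card_insert_of_notMem hqW] at this
    simp only [List.length_append, hj, List.length_singleton] at this
    convert this.mono (e := W.card + 2 * j + 3) (by omega) using 2 with F
    by_cases ha : a ∈ F
    · simp [ha, misses_insert]
    · rw [chainIndep_cons_of_notMem ha, chainIndep_cons_of_notMem ha,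
        chainIndep_concat_of_notMem ha]
      simp only [misses_insert, ha, not_false_eq_true, and_true, and_false, true_and]
      constructor
      · tauto
      · exact fun ⟨⟨h₁, h₂⟩, h₃⟩ => ⟨h₂, h₁, h₃.of_concat, h₃⟩

/-- Nonvanishing of `Ext` for cycles whose length is `1` modulo `3`. -/
theorem SRExt.misses_and_cycle {S : Set σ} {W : Finset σ} (hWS : ∀ v ∈ W, v ∉ S) {a : σ}
    {t : List σ} {j : ℕ} (hj : t.length = 3 * j) (ht : (a :: t).Nodup)
    (hW : ∀ v ∈ a :: t, v ∉ W) (hS : ∀ v ∈ a :: t, v ∉ S) :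
    SRExt K (fun F => Misses W F ∧ ChainIndep (a :: (t ++ [a])) F) S (W.card + 2 * j + 1) := by
  induction j generalizing W t with
  | zero =>
    obtain rfl : t = [] := List.eq_nil_of_length_eq_zero hj
    have := SRExt.misses K (W := insert a W) (S := S) (by
      simp only [Finset.mem_insert, forall_eq_or_imp]
      exact ⟨hS a (by simp), hWS⟩)
    rw [Finset.card_insert_of_notMem (hW a (by simp))] at this
    convert this using 2 with F
    simp [misses_insert, and_comm]
  | succ j ih =>
    rcases List.eq_nil_or_concat' t with rfl | ⟨t, p, rfl⟩
    · simp at hj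
    rcases List.eq_nil_or_concat' t with rfl | ⟨t, q, rfl⟩
    · simp at hj; omega
    rcases List.eq_nil_or_concat' t with rfl | ⟨t, r, rfl⟩
    · simp at hj; omega
    have e : t ++ [r] ++ [q] ++ [p] = t ++ [r, q, p] := by simp
    rw [e] at hj ht hW hS ⊢
    have hj' : t.length = 3 * j := by
      simp only [List.length_append, List.length_cons, List.length_nil] at hj
      omega
    have hnd := ht
    simp only [List.nodup_cons, List.mem_append, List.mem_cons, List.not_mem_nil, or_false,
      not_or, List.nodup_append, ne_eq, forall_eq_or_imp, forall_eq, not_false_eq_true,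
      List.nodup_nil, and_true] at ht
    obtain ⟨⟨hat, har, haq, hap⟩, ht, ⟨⟨hrq, hrp⟩, hqp⟩, htd⟩ := ht
    have hpW : p ∉ W := hW p (by simp)
    have hqW : q ∉ W := hW q (by simp)
    have hrW : r ∉ W := hW r (by simp)
    have haW : a ∉ W := hW a (by simp)
    have hW' : ∀ v ∈ a :: t, v ∉ insert p (insert r W) := by
      intro v hv
      have hvW : v ∉ W := hW v (by simp at hv; aesop)
      rcases List.mem_cons.1 hv with rfl | hv
      · simp [hap, har, hvW]
      · have := htd v hv
        simp [hvW, this]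
    have ih' := ih (W := insert q (insert p (insert r W))) (by
        simp only [Finset.mem_insert, forall_eq_or_imp]
        exact ⟨hS q (by simp), hS p (by simp), hS r (by simp), hWS⟩) hj' (by simp [hat, ht])
      (fun v hv => by
        rw [Finset.mem_insert, not_or]
        refine ⟨?_, hW' v hv⟩
        rcases List.mem_cons.1 hv with rfl | hv
        exacts [haq, (htd v hv).2.1])
      (fun v hv => hS v (by simp at hv; aesop))
    have hc : (insert p (insert r W)).card = W.card + 2 := by
      rw [Finset.card_insert_of_notMem (by simp [Ne.symm hrp, hpW]),
        Finset.card_insert_of_notMem hrW]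
    rw [Finset.card_insert_of_notMem (by simp [hqp, Ne.symm hrq, hqW]), hc] at ih'
    have hA := SRPdLE.misses_and_chainIndep K (insert p (insert r W)) (a :: t)
      (by simp [hat, ht]) hW'
    rw [hc, List.length_cons, hj'] at hA
    have hB := SRPdLE.misses_and_cycle_step K hj' hnd hW
    have hBa : Antitone (fun F => Misses W F ∧ q ∉ F ∧ ¬ (p ∈ F ∧ a ∈ F) ∧
        ChainIndep (a :: (t ++ [a])) F ∧ ChainIndep (a :: (t ++ [r])) F) :=
      antitone_and (misses_antitone W) (antitone_and (antitone_notMem q)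
        (antitone_and (fun A B h hB hA => hB ⟨h hA.1, h hA.2⟩)
          (antitone_and (chainIndep_antitone _) (chainIndep_antitone _))))
    have := SRExt.union (antitone_misses_and_chainIndep (insert p (insert r W)) (a :: t)) hBa
      (S := S) (d := W.card + 2 * j + 3) ?_ (hA.mono (by omega)) hB
    · rw [show W.card + 2 * (j + 1) + 1 = W.card + 2 * j + 3 by ring]
      convert this using 2 with F
      rw [chainIndep_cycle_union_iff, misses_insert, misses_insert]
      tauto
    · convert ih' using 1
      · funext F
        simp only [misses_insert, eq_iff_iff]
        constructor
        · tauto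
        · rintro ⟨⟨h₁, h₂, h₃, h₄⟩, h₅⟩
          refine ⟨⟨⟨h₂, h₃, h₄⟩, ?_⟩, h₄, h₁, fun h => h₂ h.1, h₅, ?_⟩
          · rw [← List.cons_append] at h₅
            exact h₅.of_concat
          · rw [← List.cons_append] at h₅ ⊢
            exact (chainIndep_concat_of_notMem h₃).2 h₅.of_concat
      · omega

end CycleExt

section Domination

variable {σ : Type}

/-- The independent sets of two cycles `y, ys` and `x, xs` joined by the path `x, zs, y`. -/
def joinComplex (y : σ) (ys : List σ) (x : σ) (xs zs : List σ) (F : Set σ) : Prop :=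
  ChainIndep (y :: (ys ++ [y])) F ∧ ChainIndep (x :: (xs ++ [x])) F ∧
    ChainIndep (x :: (zs ++ [y])) F

theorem joinComplex_antitone (y : σ) (ys : List σ) (x : σ) (xs zs : List σ) :
    Antitone (joinComplex y ys x xs zs) :=
  antitone_and (chainIndep_antitone _) (antitone_and (chainIndep_antitone _)
    (chainIndep_antitone _))

variable [DecidableEq σ]

/-- A path on `3 * j` vertices has a perfect dominating set of size `j` avoiding its ends. -/
theorem exists_perfectDominating {l : List σ} (hl : l.Nodup) {j : ℕ} (hj : l.length = 3 * j) :
    ∃ S : Finset σ, (∀ v ∈ S, v ∈ l) ∧ S.card = j ∧ (∀ a ∈ l.head?, a ∉ S) ∧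
      ∀ F : Set σ, ↑S ⊆ F → ∀ d, ChainIndep (l ++ [d]) F ↔ ∀ v ∈ l, v ∈ F → v ∈ S := by
  induction j generalizing l with
  | zero =>
    obtain rfl : l = [] := List.eq_nil_of_length_eq_zero hj
    exact ⟨∅, by simp⟩
  | succ j ih =>
    match l, hl, hj with
    | a :: b :: c :: l, hl, hj =>
      simp only [List.nodup_cons, List.mem_cons, not_or] at hl
      obtain ⟨⟨hab, hac, hal⟩, ⟨hbc, hbl⟩, hcl, hl⟩ := hl
      obtain ⟨S, hSl, hS, -, h⟩ := ih hl (by simp only [List.length_cons] at hj; omega)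
      refine ⟨insert b S, ?_, ?_, ?_, fun F hF d => ?_⟩
      · simp only [Finset.mem_insert, forall_eq_or_imp, List.mem_cons]
        exact ⟨by simp, fun v hv => by simp [hSl v hv]⟩
      · rw [Finset.card_insert_of_notMem fun hb => hbl (hSl b hb), hS]
      · simp only [List.head?_cons, Option.mem_def, Option.some.injEq, forall_eq',
          Finset.mem_insert, not_or]
        exact ⟨hab, fun ha => hal (hSl a ha)⟩
      · rw [Finset.coe_insert, Set.insert_subset_iff] at hF
        have haS : a ∉ S := fun ha => hal (hSl a ha)
        have hcS : c ∉ S := fun ha => hcl (hSl c ha)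
        simp only [List.cons_append, chainIndep_cons_cons, hF.1, and_true, true_and,
          List.mem_cons, forall_eq_or_imp, Finset.mem_insert, hab, Ne.symm hbc, haS, hcS,
          or_false, true_or, implies_true, imp_false]
        refine and_congr_right fun _ => and_congr_right fun hc => ?_
        rw [chainIndep_cons_of_notMem hc, h F hF.2 d]
        refine forall₂_congr fun v hv => imp_congr_right fun _ => ?_
        simp [show v ≠ b from fun e => hbl (e ▸ hv)]

/-- The inner vertices of a path both of whose ends lie in `F`. -/
theorem exists_dominating_of_mem {l : List σ} (hl : l.Nodup) (hl₀ : l ≠ []) :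
    ∃ S : Finset σ, (∀ v ∈ S, v ∈ l) ∧ S.card = l.length / 3 ∧
      ∀ F : Set σ, ↑S ⊆ F → ∀ a d, a ∈ F → (l.length % 3 = 2 → d ∈ F) →
        (ChainIndep (a :: (l ++ [d])) F ↔ ∀ v ∈ l, v ∈ F → v ∈ S) := by
  obtain ⟨b, l, rfl⟩ := List.exists_cons_of_ne_nil hl₀
  simp only [List.nodup_cons] at hl
  obtain ⟨hbl, hl⟩ := hl
  simp only [List.length_cons, List.mem_cons, forall_eq_or_imp, List.cons_append]
  obtain h | h | h : l.length % 3 = 0 ∨ l.length % 3 = 1 ∨ l.length % 3 = 2 := by omega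
  · obtain ⟨S, hSl, hS, -, hSF⟩ := exists_perfectDominating hl (j := l.length / 3) (by omega)
    refine ⟨S, fun v hv => Or.inr (hSl v hv), by omega, fun F hF a d ha _ => ?_⟩
    have hbS : b ∉ S := fun hb => hbl (hSl b hb)
    rw [chainIndep_cons_cons_of_mem ha, hSF F hF d]
    simp [hbS]
  · obtain ⟨l, c, rfl⟩ := List.eq_nil_or_concat' l |>.resolve_left (by rintro rfl; simp at h)
    simp only [List.length_append, List.length_singleton, List.mem_append, List.mem_singleton,
      not_or, List.nodup_append] at h hbl hl ⊢
    obtain ⟨S, hSl, hS, -, hSF⟩ := exists_perfectDominating hl.1 (j := l.length / 3) (by omega)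
    refine ⟨S, fun v hv => Or.inr (Or.inl (hSl v hv)), by omega, fun F hF a d ha hd => ?_⟩
    have hbS : b ∉ S := fun hb => hbl.1 (hSl b hb)
    have hcS : c ∉ S := fun hb => hl.2.2 c (hSl c hb) c rfl rfl
    have e : l ++ [c] ++ [d] = l ++ [c, d] := by simp
    rw [chainIndep_cons_cons_of_mem ha, e, chainIndep_concat_concat_of_mem (hd (by omega))]
    simp only [hbS, imp_false, or_imp, forall_and, forall_eq, hcS]
    refine and_congr_right fun _ => ⟨fun ⟨h₁, h₂⟩ => ⟨?_, h₁⟩, fun ⟨h₁, h₂⟩ => ⟨h₂, ?_⟩⟩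
    · rwa [← hSF F hF c, chainIndep_concat_of_notMem h₁]
    · rwa [← hSF F hF c, chainIndep_concat_of_notMem h₂] at h₁
  · match l, hl, hbl, h with
    | c :: e :: l, hl, hbl, h =>
      simp only [List.nodup_cons, List.mem_cons, not_or, List.length_cons] at hl hbl h ⊢
      obtain ⟨⟨hce, hcl⟩, hel, hl⟩ := hl
      obtain ⟨S, hSl, hS, -, hSF⟩ := exists_perfectDominating hl (j := l.length / 3) (by omega)
      refine ⟨insert c S, ?_, ?_, fun F hF a d ha _ => ?_⟩
      · simp only [Finset.mem_insert, forall_eq_or_imp]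
        exact ⟨by simp, fun v hv => by simp [hSl v hv]⟩
      · rw [Finset.card_insert_of_notMem fun hb => hcl (hSl c hb), hS]
        omega
      · rw [Finset.coe_insert, Set.insert_subset_iff] at hF
        have hbS : b ∉ insert c S := by
          simp only [Finset.mem_insert, not_or]
          exact ⟨hbl.1, fun ha => hbl.2.2 (hSl b ha)⟩
        have heS : e ∉ insert c S := by
          simp only [Finset.mem_insert, not_or]
          exact ⟨Ne.symm hce, fun ha => hel (hSl e ha)⟩
        rw [chainIndep_cons_cons_of_mem ha, List.cons_append, List.cons_append,
          chainIndep_cons_cons_of_mem hF.1, hSF F hF.2 d]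
        simp only [or_imp, forall_and, forall_eq, hbS, imp_false, heS, Finset.mem_insert_self,
          implies_true, true_and]
        refine and_congr_right fun _ => and_congr_right fun _ => ?_
        refine forall₂_congr fun v hv => imp_congr_right fun _ => ?_
        simp [show v ≠ c from fun e => hcl (e ▸ hv)]

/-- A perfect dominating set of a cycle with a tail `zs`, avoiding the end of the tail. -/
theorem exists_dominating_tadpole {x : σ} {xs zs : List σ} (h : (x :: xs ++ zs).Nodup)
    (hxs : xs ≠ []) (hzs : zs ≠ []) (hmk : (xs.length + 1 + zs.length) % 3 = 0) :
    ∃ S : Finset σ, (∀ v ∈ S, v ∈ x :: xs ++ zs) ∧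
      S.card = (xs.length + 1 + zs.length) / 3 ∧ ∀ F : Set σ, ↑S ⊆ F → ∀ y,
        (ChainIndep (x :: (xs ++ [x])) F ∧ ChainIndep (x :: (zs ++ [y])) F ↔
          ∀ v ∈ x :: xs ++ zs, v ∈ F → v ∈ S) := by
  have hxs' : xs.Nodup := by grind
  have hzs' : zs.Nodup := by grind
  by_cases hz : zs.length % 3 = 2
  · obtain ⟨S₂, hS₂, hc₂, -, h₂⟩ := exists_perfectDominating hxs' (j := xs.length / 3) (by omega)
    obtain ⟨S₃, hS₃, hc₃, hx₃, h₃⟩ := exists_perfectDominating (l := x :: zs) (by grind)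
      (j := (zs.length + 1) / 3) (by simp only [List.length_cons]; omega)
    refine ⟨S₂ ∪ S₃, ?_, ?_, fun F hF y => ?_⟩
    · simp only [Finset.mem_union, List.mem_append, List.mem_cons]
      grind
    · rw [Finset.card_union_of_disjoint, hc₂, hc₃]
      · omega
      · rw [Finset.disjoint_left]
        grind
    · rw [Finset.coe_union, Set.union_subset_iff] at hF
      rw [show x :: (zs ++ [y]) = x :: zs ++ [y] from rfl, h₃ F hF.2]
      have hx₃ : x ∉ S₃ := hx₃ x rfl
      by_cases hx : x ∈ F
      · simp only [List.mem_cons, List.mem_append, Finset.mem_union]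
        grind
      · rw [chainIndep_cons_of_notMem hx, h₂ F hF.1]
        simp only [List.mem_cons, List.mem_append, Finset.mem_union]
        grind
  · obtain ⟨S₂, hS₂, hc₂, h₂⟩ := exists_dominating_of_mem hxs' hxs
    obtain ⟨S₃, hS₃, hc₃, h₃⟩ := exists_dominating_of_mem hzs' hzs
    refine ⟨insert x (S₂ ∪ S₃), ?_, ?_, fun F hF y => ?_⟩
    · simp only [Finset.mem_insert, Finset.mem_union, List.mem_append, List.mem_cons]
      grind
    · rw [Finset.card_insert_of_notMem (by simp only [Finset.mem_union]; grind),
        Finset.card_union_of_disjoint, hc₂, hc₃]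
      · omega
      · rw [Finset.disjoint_left]
        grind
    · rw [Finset.coe_insert, Finset.coe_union, Set.insert_subset_iff, Set.union_subset_iff] at hF
      rw [h₂ F hF.2.1 x x hF.1 fun _ => hF.1, h₃ F hF.2.2 x y hF.1 (by tauto)]
      simp only [List.mem_cons, List.mem_append, Finset.mem_union, Finset.mem_insert]
      grind

variable (K : Type) [Field K] {y x : σ} {ys xs zs : List σ}

theorem exists_SRExt_joinComplex (h : (y :: ys ++ (x :: xs ++ zs)).Nodup) (hys : ys ≠ [])
    (hxs : xs ≠ []) (hzs : zs ≠ []) :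
    ∃ S, SRExt K (joinComplex y ys x xs zs) S
      (ys.length + xs.length + zs.length - (ys.length / 3 + xs.length / 3 + zs.length / 3)) := by
  have hys' : ys.Nodup := by grind
  have hxs' : xs.Nodup := by grind
  have hzs' : zs.Nodup := by grind
  obtain ⟨S₁, hS₁, hc₁, h₁⟩ := exists_dominating_of_mem hys' hys
  obtain ⟨S₂, hS₂, hc₂, h₂⟩ := exists_dominating_of_mem hxs' hxs
  obtain ⟨S₃, hS₃, hc₃, h₃⟩ := exists_dominating_of_mem hzs' hzs
  have hL : (ys ++ xs ++ zs).Nodup := by grind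
  have hS : (S₁ ∪ S₂ ∪ S₃).card = ys.length / 3 + xs.length / 3 + zs.length / 3 := by
    rw [Finset.card_union_of_disjoint, Finset.card_union_of_disjoint, hc₁, hc₂, hc₃]
    · rw [Finset.disjoint_left]
      grind
    · rw [Finset.disjoint_left]
      grind
  have hSL : S₁ ∪ S₂ ∪ S₃ ⊆ (ys ++ xs ++ zs).toFinset := by
    intro v
    simp only [Finset.mem_union, List.mem_toFinset, List.mem_append]
    grind
  let T := insert x (insert y (S₁ ∪ S₂ ∪ S₃))
  have hW := SRExt.misses K (W := (ys ++ xs ++ zs).toFinset \ (S₁ ∪ S₂ ∪ S₃)) (S := ↑T) (by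
    intro v
    simp only [Finset.mem_sdiff, Finset.mem_union, List.mem_toFinset, List.mem_append, T,
      Finset.mem_coe, Finset.mem_insert]
    grind)
  rw [Finset.card_sdiff_of_subset hSL, hS, List.toFinset_card_of_nodup hL] at hW
  refine ⟨_, SRExt.of_star_finset K (joinComplex_antitone y ys x xs zs) T (fun v hv => hv) ?_⟩
  simp only [List.length_append] at hW
  convert hW using 2 with F
  have hT : ∀ v ∈ T, v ∈ F ∪ ↑T := fun v hv => Or.inr hv
  have hx := hT x (by simp [T])
  have hy := hT y (by simp [T])
  unfold joinComplex
  rw [h₁ _ (fun v hv => hT v (by simp at hv; simp [T, hv])) y y hy fun _ => hy,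
    h₂ _ (fun v hv => hT v (by simp at hv; simp [T, hv])) x x hx fun _ => hx,
    h₃ _ (fun v hv => hT v (by simp at hv; simp [T, hv])) x y hx fun _ => hy]
  simp only [Misses, Finset.mem_sdiff, Finset.mem_union, List.mem_toFinset, List.mem_append,
    Set.mem_union, Finset.mem_coe, T, Finset.mem_insert]
  grind

theorem exists_SRExt_joinComplex_of_mod (h : (y :: ys ++ (x :: xs ++ zs)).Nodup)
    (hys : ys.length % 3 = 0) (hxs : xs ≠ []) (hzs : zs ≠ [])
    (hmk : (xs.length + 1 + zs.length) % 3 = 0) :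
    ∃ S, SRExt K (joinComplex y ys x xs zs) S
      (2 * (ys.length + (xs.length + 1 + zs.length)) / 3 + 1) := by
  have hL : (x :: xs ++ zs).Nodup := by grind
  obtain ⟨S, hS, hc, hSF⟩ := exists_dominating_tadpole hL hxs hzs hmk
  have hSL : S ⊆ (x :: xs ++ zs).toFinset := fun v hv => List.mem_toFinset.2 (hS v hv)
  have hW := SRExt.misses_and_cycle K (S := ↑S) (W := (x :: xs ++ zs).toFinset \ S)
    (fun v hv => by simpa using (Finset.mem_sdiff.1 hv).2) (a := y) (t := ys)
    (j := ys.length / 3) (by omega) (by grind)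
    (fun v hv => by simp only [Finset.mem_sdiff, List.mem_toFinset]; grind)
    (fun v hv => by rw [Finset.mem_coe]; grind)
  rw [Finset.card_sdiff_of_subset hSL, hc, List.toFinset_card_of_nodup hL] at hW
  refine ⟨_, SRExt.of_star_finset K (joinComplex_antitone y ys x xs zs) S (fun v hv => hv) ?_⟩
  simp only [List.length_append, List.length_cons] at hW
  convert hW using 1
  · funext F
    rw [joinComplex, hSF _ Set.subset_union_right, and_comm]
    refine congr_arg₂ _ ?_ (propext (chainIndep_congr fun v hv => ?_))
    · simp only [Misses, Finset.mem_sdiff, List.mem_toFinset, Set.mem_union, Finset.mem_coe,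
        eq_iff_iff]
      grind
    · rw [Set.mem_union, Finset.mem_coe, or_iff_left_iff_imp]
      grind
  · omega

end Domination

section Cuts
open MvPolynomial

variable {σ : Type} (K : Type) [Field K]

/-- There are `s` polynomials in the Stanley–Reisner ideal of `Δ` such that for each prime ideal
containing them, the set of variables outside this prime ideal satisfies `Q`. -/
def Cuts (Δ Q : Set σ → Prop) (s : ℕ) : Prop :=
  ∃ f : Fin s → MvPolynomial σ K, (∀ i, f i ∈ srIdeal K Δ) ∧
    ∀ P : Ideal (MvPolynomial σ K), P.IsPrime → (∀ i, f i ∈ P) → Q {v | X v ∉ P}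

variable {K} {Δ Q Q' : Set σ → Prop} {s s' : ℕ}

theorem Cuts.mono (h : Cuts K Δ Q s) (hQ : ∀ F, Q F → Q' F) : Cuts K Δ Q' s := by
  obtain ⟨f, hf, h⟩ := h
  exact ⟨f, hf, fun P hP hfP => hQ _ (h P hP hfP)⟩

theorem Cuts.and (h : Cuts K Δ Q s) (h' : Cuts K Δ Q' s') :
    Cuts K Δ (fun F => Q F ∧ Q' F) (s + s') := by
  obtain ⟨f, hf, h⟩ := h
  obtain ⟨f', hf', h'⟩ := h'
  refine ⟨Fin.append f f', fun i => ?_, fun P hP hfP => ⟨h P hP fun i => ?_, h' P hP fun i => ?_⟩⟩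
  · refine Fin.addCases (fun i => ?_) (fun i => ?_) i
    · rw [Fin.append_left]
      exact hf i
    · rw [Fin.append_right]
      exact hf' i
  · simpa using hfP (Fin.castAdd s' i)
  · simpa using hfP (Fin.natAdd s i)

theorem Cuts.of_forall (h : ∀ F, Q F) : Cuts K Δ Q 0 :=
  ⟨Fin.elim0, fun i => i.elim0, fun _ _ _ => h _⟩

theorem X_mul_X_mem_srIdeal (hΔ : Antitone Δ) {a b : σ} (h : ∀ F, Δ F → ¬ (a ∈ F ∧ b ∈ F)) :
    (X a * X b : MvPolynomial σ K) ∈ srIdeal K Δ := by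
  classical
  rw [show (X a * X b : MvPolynomial σ K) =
    monomial (Finsupp.single a 1 + Finsupp.single b 1) 1 by simp [X, monomial_mul]]
  refine monomial_mem_srIdeal hΔ (fun hF => h _ hF ?_) 1
  simp

theorem X_mul_X_mem_iff {P : Ideal (MvPolynomial σ K)} (hP : P.IsPrime) {a b : σ} :
    X a * X b ∈ P ↔ ¬ (a ∈ {v | X v ∉ P} ∧ b ∈ {v | X v ∉ P}) := by
  rw [hP.mul_mem_iff_mem_or_mem, Set.mem_ofPred_eq, Set.mem_ofPred_eq]
  tauto

theorem Cuts.edge (hΔ : Antitone Δ) {a b : σ} (h : ∀ F, Δ F → ¬ (a ∈ F ∧ b ∈ F)) :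
    Cuts K Δ (fun F => ¬ (a ∈ F ∧ b ∈ F)) 1 :=
  ⟨fun _ => X a * X b, fun _ => X_mul_X_mem_srIdeal hΔ h,
    fun _ hP hf => (X_mul_X_mem_iff hP).1 (hf 0)⟩

theorem Cuts.edge_add_edge (hΔ : Antitone Δ) {a b c d : σ}
    (h : ∀ F, Δ F → ¬ (a ∈ F ∧ b ∈ F)) (h' : ∀ F, Δ F → ¬ (c ∈ F ∧ d ∈ F)) :
    Cuts K Δ (fun F => a ∈ F ∧ b ∈ F ↔ c ∈ F ∧ d ∈ F) 1 := by
  refine ⟨fun _ => X a * X b + X c * X d,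
    fun _ => Ideal.add_mem _ (X_mul_X_mem_srIdeal hΔ h) (X_mul_X_mem_srIdeal hΔ h'),
    fun P hP hf => ?_⟩
  beta_reduce
  rw [← not_iff_not, ← X_mul_X_mem_iff hP, ← X_mul_X_mem_iff hP]
  exact ⟨fun hab => (Ideal.add_mem_iff_right _ hab).1 (hf 0),
    fun hcd => (Ideal.add_mem_iff_left _ hcd).1 (hf 0)⟩

theorem Cuts.exists_radical_eq [Finite σ] (hΔ : Antitone Δ) (h : Cuts K Δ Δ s) :
    ∃ f : Fin s → MvPolynomial σ K,
      (Ideal.span (Set.range f)).radical = (srIdeal K Δ).radical := by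
  obtain ⟨f, hf, h⟩ := h
  refine ⟨f, le_antisymm (Ideal.radical_mono ?_) ?_⟩
  · rw [Ideal.span_le, Set.range_subset_iff]
    exact hf
  · rw [Ideal.radical_eq_sInf (Ideal.span _)]
    refine le_sInf fun P ⟨hfP, hP⟩ => ?_
    rw [hP.radical_le_iff, srIdeal_le_iff hΔ]
    intro m hm
    have hF := h P hP fun i => hfP (Ideal.subset_span ⟨i, rfl⟩)
    have hmF : ¬ (m.support : Set σ) ⊆ {v | X v ∉ P} := fun hs => hm (hΔ hs hF)
    obtain ⟨v, hv, hvP⟩ := Set.not_subset.1 hmF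
    rw [Set.mem_ofPred_eq, not_not] at hvP
    have hvm : Finsupp.single v 1 ≤ m := by
      rw [Finsupp.single_le_iff]
      exact Nat.one_le_iff_ne_zero.2 (Finsupp.mem_support_iff.1 hv)
    rw [← tsub_add_cancel_of_le hvm, ← one_mul (1 : K), ← monomial_mul]
    exact P.mul_mem_left _ hvP

theorem Cuts.chainIndep (hΔ : Antitone Δ) {l : List σ} {j : ℕ} (hl : l.length = 3 * j + 1)
    (h : ∀ F, Δ F → ChainIndep l F) : Cuts K Δ (ChainIndep l) (2 * j) := by
  induction j generalizing l with
  | zero =>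
    match l, hl with
    | [a], _ => exact Cuts.of_forall fun F => chainIndep_singleton a F
  | succ j ih =>
    match l, hl with
    | a :: b :: c :: d :: l, hl =>
      simp only [chainIndep_cons_cons] at h
      have := ((Cuts.edge (K := K) hΔ (a := b) (b := c) fun F hF => (h F hF).2.1).and
        (Cuts.edge_add_edge hΔ (a := a) (b := b) (c := c) (d := d) (fun F hF => (h F hF).1)
          fun F hF => (h F hF).2.2.1)).and
        (ih (l := d :: l) (by simp at hl ⊢; omega) fun F hF => (h F hF).2.2.2)
      rw [show 2 * (j + 1) = 1 + 1 + 2 * j by ring]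
      refine this.mono fun F => ?_
      simp only [chainIndep_cons_cons]
      tauto

theorem Cuts.chainIndep_or (hΔ : Antitone Δ) {a b : σ} {t : List σ} {j : ℕ}
    (ht : t.length = 3 * j) (h : ∀ F, Δ F → ChainIndep (a :: b :: t) F) :
    Cuts K Δ (fun F => ChainIndep (a :: b :: t) F ∨
      a ∈ F ∧ b ∈ F ∧ (b :: t).getLast (by simp) ∈ F) (2 * j) := by
  induction j generalizing a b t with
  | zero =>
    obtain rfl : t = [] := by simpa using ht
    refine Cuts.of_forall fun F => ?_
    simp
    tauto
  | succ j ih =>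
    match t, ht with
    | c :: d :: e :: t, ht =>
      simp only [chainIndep_cons_cons] at h ih
      have := ((Cuts.edge_add_edge (K := K) hΔ (a := a) (b := b) (c := c) (d := d)
        (fun F hF => (h F hF).1) fun F hF => (h F hF).2.2.1).and
        (Cuts.edge_add_edge hΔ (a := b) (b := c) (c := d) (d := e) (fun F hF => (h F hF).2.1)
          fun F hF => (h F hF).2.2.2.1)).and
        (ih (t := t) (by simp at ht ⊢; omega) fun F hF => (h F hF).2.2.2)
      rw [show 2 * (j + 1) = 1 + 1 + 2 * j by ring]
      refine this.mono fun F => ?_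
      simp only [chainIndep_cons_cons, List.getLast_cons_cons]
      grind

/-- A cycle of length `2` modulo `3` together with two consecutive further edges. -/
theorem Cuts.cycle_with_tail (hΔ : Antitone Δ) {y z w : σ} {ys : List σ} {j : ℕ}
    (hys : ys.length = 3 * j + 4) (hc : ∀ F, Δ F → ChainIndep (y :: (ys ++ [y])) F)
    (hz : ∀ F, Δ F → ¬ (y ∈ F ∧ z ∈ F)) (hw : ∀ F, Δ F → ¬ (z ∈ F ∧ w ∈ F)) :
    Cuts K Δ (fun F => ChainIndep (y :: (ys ++ [y])) F ∧ ¬ (y ∈ F ∧ z ∈ F) ∧ ¬ (z ∈ F ∧ w ∈ F))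
      (2 * j + 4) := by
  match ys, hys with
  | a :: b :: t', hys =>
    rcases List.eq_nil_or_concat' t' with rfl | ⟨t', r, rfl⟩
    · simp at hys
    rcases List.eq_nil_or_concat' t' with rfl | ⟨t, q, rfl⟩
    · simp at hys
    obtain ⟨s, p, hs⟩ : ∃ s p, b :: t = s ++ [p] := ⟨_, _, (List.dropLast_append_getLast
      (List.cons_ne_nil b t)).symm⟩
    have key : ∀ F, ChainIndep (y :: (a :: b :: (t ++ [q] ++ [r]) ++ [y])) F ↔
        ¬ (y ∈ F ∧ a ∈ F) ∧ ChainIndep (a :: b :: t) F ∧ ¬ (p ∈ F ∧ q ∈ F) ∧ ¬ (q ∈ F ∧ r ∈ F) ∧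
          ¬ (r ∈ F ∧ y ∈ F) := by
      intro F
      rw [show a :: b :: (t ++ [q] ++ [r]) ++ [y] = (a :: s) ++ p :: [q, r, y] by
          have := congrArg (· ++ [q, r, y]) hs
          simpa using this,
        show a :: b :: t = (a :: s) ++ [p] by simp [hs], List.cons_append, chainIndep_cons_cons,
        ← List.cons_append, chainIndep_split (l₁ := a :: s) (c := p)]
      simp
    simp only [key] at hc
    have hp : (b :: t).getLast (by simp) = p := by simp [hs]
    have := ((((Cuts.edge (K := K) hΔ (a := p) (b := q) fun F hF => (hc F hF).2.2.1).and
      (Cuts.edge_add_edge hΔ (a := q) (b := r) (c := y) (d := a)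
        (fun F hF => (hc F hF).2.2.2.1) fun F hF => (hc F hF).1)).and
      (Cuts.edge_add_edge hΔ (a := a) (b := b) (c := y) (d := z)
        (fun F hF => (chainIndep_cons_cons.1 (hc F hF).2.1).1) hz)).and
      (Cuts.edge_add_edge hΔ (a := r) (b := y) (c := z) (d := w)
        (fun F hF => (hc F hF).2.2.2.2) hw)).and
      (Cuts.chainIndep_or hΔ (a := a) (b := b) (t := t) (j := j)
        (by simp at hys; omega) fun F hF => (hc F hF).2.1)
    rw [show 2 * j + 4 = 1 + 1 + 1 + 1 + 2 * j by ring]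
    refine this.mono fun F => ?_
    rw [key, hp, chainIndep_cons_cons]
    grind

end Cuts

section JoinCuts

variable {σ : Type} (K : Type) [Field K] {y x : σ} {ys xs zs : List σ} {i j l : ℕ}

/-- A cycle whose length is divisible by `3`. -/
theorem Cuts.joinComplex_of_zero (hys : ys.length = 3 * j + 2)
    (hxz : xs.length + zs.length = 3 * i) (hzs : zs ≠ []) :
    Cuts K (joinComplex y ys x xs zs) (joinComplex y ys x xs zs) (2 * j + 2 * i + 3) := by
  have hΔ := joinComplex_antitone y ys x xs zs
  obtain ⟨zs', z, rfl⟩ := (List.eq_nil_or_concat' zs).resolve_left hzs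
  obtain ⟨r, w, hr⟩ := (List.eq_nil_or_concat' (x :: zs')).resolve_left (by simp)
  match ys, hys with
  | a :: c :: t, hys =>
    obtain ⟨s, b, hs⟩ := (List.eq_nil_or_concat' (c :: t)).resolve_left (by simp)
    have key : ∀ F, joinComplex y (a :: c :: t) x xs (zs' ++ [z]) F ↔
        (¬ (y ∈ F ∧ a ∈ F) ∧ ¬ (a ∈ F ∧ c ∈ F) ∧ ChainIndep (c :: t) F ∧ ¬ (b ∈ F ∧ y ∈ F)) ∧
        ChainIndep (x :: (xs ++ x :: zs')) F ∧ ¬ (w ∈ F ∧ z ∈ F) ∧ ¬ (z ∈ F ∧ y ∈ F) := by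
      intro F
      rw [joinComplex, show x :: (xs ++ x :: zs') = (x :: xs) ++ x :: zs' from rfl,
        chainIndep_split (l₁ := x :: xs),
        show x :: (zs' ++ [z] ++ [y]) = r ++ w :: [z, y] by
          simpa using congrArg (· ++ [z, y]) hr, hr, chainIndep_split (l₁ := r),
        List.cons_append, List.cons_append, chainIndep_cons_cons, chainIndep_cons_cons,
        show c :: (t ++ [y]) = s ++ b :: [y] by simpa using congrArg (· ++ [y]) hs,
        chainIndep_split (l₁ := s), ← hs]
      simp
      tauto
    have := ((((Cuts.edge (K := K) hΔ fun F hF => ((key F).1 hF).2.2.2).and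
      (Cuts.edge_add_edge hΔ (fun F hF => ((key F).1 hF).1.1)
        fun F hF => ((key F).1 hF).2.2.1)).and
      (Cuts.edge_add_edge hΔ (fun F hF => ((key F).1 hF).1.2.2.2)
        fun F hF => ((key F).1 hF).1.2.1)).and
      (Cuts.chainIndep hΔ (j := j) (by simp at hys ⊢; omega)
        fun F hF => ((key F).1 hF).1.2.2.1)).and
      (Cuts.chainIndep hΔ (j := i) (by simp at hxz ⊢; omega)
        fun F hF => ((key F).1 hF).2.1)
    rw [show 2 * j + 2 * i + 3 = 1 + 1 + 1 + 2 * j + 2 * i by ring]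
    refine this.mono fun F => ?_
    rw [key]
    grind

/-- A cycle whose length is `1` modulo `3`. -/
theorem Cuts.joinComplex_of_one (hys : ys.length = 3 * j + 3)
    (hxz : xs.length + zs.length + 1 = 3 * i) (hzs : zs ≠ []) :
    Cuts K (joinComplex y ys x xs zs) (joinComplex y ys x xs zs) (2 * j + 2 * i + 3) := by
  have hΔ := joinComplex_antitone y ys x xs zs
  obtain ⟨r, z, hr⟩ := (List.eq_nil_or_concat' zs).resolve_left hzs
  match ys, hys with
  | a :: c :: t, hys =>
    rcases List.eq_nil_or_concat' t with rfl | ⟨t, b, rfl⟩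
    · simp at hys
    obtain ⟨s, e, hs⟩ := (List.eq_nil_or_concat' (c :: t)).resolve_left (by simp)
    have key : ∀ F, joinComplex y (a :: c :: (t ++ [b])) x xs zs F ↔
        (¬ (y ∈ F ∧ a ∈ F) ∧ ¬ (a ∈ F ∧ c ∈ F) ∧ ChainIndep (c :: t) F ∧ ¬ (e ∈ F ∧ b ∈ F) ∧
          ¬ (b ∈ F ∧ y ∈ F)) ∧
        ChainIndep (x :: (xs ++ x :: zs)) F ∧ ¬ (z ∈ F ∧ y ∈ F) := by
      intro F
      rw [joinComplex, show x :: (xs ++ x :: zs) = (x :: xs) ++ x :: zs from rfl,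
        chainIndep_split (l₁ := x :: xs),
        hr, show x :: (r ++ [z] ++ [y]) = (x :: r) ++ z :: [y] by simp,
        chainIndep_split (l₁ := x :: r),
        List.cons_append, List.cons_append, chainIndep_cons_cons, chainIndep_cons_cons,
        show c :: (t ++ [b] ++ [y]) = s ++ e :: [b, y] by
          simpa using congrArg (· ++ [b, y]) hs,
        chainIndep_split (l₁ := s), ← hs]
      simp
      tauto
    have := ((((Cuts.edge (K := K) hΔ fun F hF => ((key F).1 hF).1.1).and
      (Cuts.edge_add_edge hΔ (fun F hF => ((key F).1 hF).1.2.2.2.2)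
        fun F hF => ((key F).1 hF).1.2.1)).and
      (Cuts.edge_add_edge hΔ (fun F hF => ((key F).1 hF).2.2)
        fun F hF => ((key F).1 hF).1.2.2.2.1)).and
      (Cuts.chainIndep hΔ (j := j) (by simp at hys ⊢; omega)
        fun F hF => ((key F).1 hF).1.2.2.1)).and
      (Cuts.chainIndep hΔ (j := i) (by simp at hxz ⊢; omega)
        fun F hF => ((key F).1 hF).2.1)
    rw [show 2 * j + 2 * i + 3 = 1 + 1 + 1 + 2 * j + 2 * i by ring]
    refine this.mono fun F => ?_
    rw [key]
    grind

/-- Two cycles of length `2` modulo `3`. -/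
theorem Cuts.joinComplex_of_two_of_two (hys : ys.length = 3 * j + 4)
    (hxs : xs.length = 3 * i + 4) (hzs : zs.length = 3 * l + 3) :
    Cuts K (joinComplex y ys x xs zs) (joinComplex y ys x xs zs)
      (2 * j + 2 * i + 2 * l + 8) := by
  have hΔ := joinComplex_antitone y ys x xs zs
  match zs, hzs with
  | z :: w :: t', hzs =>
    rcases List.eq_nil_or_concat' t' with rfl | ⟨t, v, rfl⟩
    · simp at hzs
    obtain ⟨s, u, hs⟩ := (List.eq_nil_or_concat' (w :: t)).resolve_left (by simp)
    have key : ∀ F, joinComplex y ys x xs (z :: w :: (t ++ [v])) F ↔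
        (ChainIndep (y :: (ys ++ [y])) F ∧ ¬ (y ∈ F ∧ v ∈ F) ∧ ¬ (v ∈ F ∧ u ∈ F)) ∧
        (ChainIndep (x :: (xs ++ [x])) F ∧ ¬ (x ∈ F ∧ z ∈ F) ∧ ¬ (z ∈ F ∧ w ∈ F)) ∧
        ChainIndep (w :: t) F := by
      intro F
      rw [joinComplex, List.cons_append, List.cons_append, chainIndep_cons_cons,
        chainIndep_cons_cons, show w :: (t ++ [v] ++ [y]) = s ++ u :: [v, y] by
          simpa using congrArg (· ++ [v, y]) hs,
        chainIndep_split (l₁ := s), ← hs]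
      simp
      tauto
    have := ((Cuts.cycle_with_tail (K := K) hΔ hys (fun F hF => ((key F).1 hF).1.1)
        (fun F hF => ((key F).1 hF).1.2.1) fun F hF => ((key F).1 hF).1.2.2).and
      (Cuts.cycle_with_tail (K := K) hΔ hxs (fun F hF => ((key F).1 hF).2.1.1)
        (fun F hF => ((key F).1 hF).2.1.2.1) fun F hF => ((key F).1 hF).2.1.2.2)).and
      (Cuts.chainIndep hΔ (j := l) (by simp at hzs ⊢; omega)
        fun F hF => ((key F).1 hF).2.2)
    rw [show 2 * j + 2 * i + 2 * l + 8 = 2 * j + 4 + (2 * i + 4) + 2 * l by ring]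
    refine this.mono fun F => ?_
    rw [key]
    tauto

theorem joinComplex_swap (y : σ) (ys : List σ) (x : σ) (xs zs : List σ) :
    joinComplex y ys x xs zs = joinComplex x xs y ys zs.reverse := by
  funext F
  rw [joinComplex, joinComplex, ← chainIndep_reverse (l := x :: (zs ++ [y]))]
  simp only [List.reverse_cons, List.reverse_append, List.reverse_nil, List.nil_append,
    List.cons_append, eq_iff_iff]
  tauto

theorem Cuts.joinComplex_of_not (hys : 2 ≤ ys.length) (hxs : 2 ≤ xs.length) (hzs : zs ≠ [])
    (hN : (ys.length + xs.length + zs.length) % 3 = 2)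
    (h : ¬ (ys.length % 3 = 1 ∧ xs.length % 3 = 1)) :
    Cuts K (joinComplex y ys x xs zs) (joinComplex y ys x xs zs)
      (2 * ((ys.length + xs.length + zs.length) / 3) + 3) := by
  wlog hy : ys.length % 3 ≠ 1 generalizing y ys x xs zs
  · rw [joinComplex_swap]
    have := this (y := x) (x := y) (zs := zs.reverse) hxs hys (by simpa using hzs)
      (by simp; omega) (by tauto) (by tauto)
    rwa [List.length_reverse, add_comm xs.length] at this
  by_cases hy₂ : ys.length % 3 = 2
  · have := Cuts.joinComplex_of_zero K (y := y) (ys := ys) (x := x) (xs := xs) (zs := zs)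
      (j := ys.length / 3) (i := (xs.length + zs.length) / 3) (by omega) (by omega) hzs
    convert this using 1
    omega
  · have := Cuts.joinComplex_of_one K (y := y) (ys := ys) (x := x) (xs := xs) (zs := zs)
      (j := ys.length / 3 - 1) (i := (xs.length + zs.length + 1) / 3) (by omega) (by omega) hzs
    convert this using 1
    omega

end JoinCuts

section Main
open MvPolynomial

theorem araRank_eq_and_projDim_eq {σ K : Type} [Field K] [Fintype σ] [DecidableEq σ]
    {Δ : Set σ → Prop} (hΔ : Antitone Δ) {d : ℕ} (hd : 0 < d) (hC : Cuts K Δ Δ d) {S : Set σ}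
    (hS : SRExt K Δ S d) :
    araRank (srIdeal K Δ) = d ∧
      projDim (MvPolynomial σ K) (MvPolynomial σ K ⧸ srIdeal K Δ) = d := by
  obtain ⟨f, hf⟩ := hC.exists_radical_eq hΔ
  refine ⟨le_antisymm (Nat.sInf_le ⟨f, hf⟩) (le_csInf ⟨d, f, hf⟩ ?_), ?_⟩
  · rintro s ⟨g, hg⟩
    by_contra! hs
    exact hS.not_SRPdLE hs (hasProjectiveDimensionLT_of_radical_eq hΔ g hg)
  · refine projDim_eq_of_hasProjectiveDimensionLT
      (hasProjectiveDimensionLT_of_radical_eq hΔ f hf) (fun h => ?_) hd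
    refine hS.not_SRPdLE (d := d - 1) (by omega) ?_
    rwa [SRPdLE, Nat.sub_add_cancel hd]

variable {σ : Type} (K : Type) [Field K] [DecidableEq σ] {y x : σ} {ys xs zs : List σ}

theorem exists_SRExt_joinComplex_of_not (h : (y :: ys ++ (x :: xs ++ zs)).Nodup)
    (hys : ys ≠ []) (hxs : xs ≠ []) (hzs : zs ≠ [])
    (hN : (ys.length + xs.length + zs.length) % 3 = 2)
    (hyx : ¬ (ys.length % 3 = 1 ∧ xs.length % 3 = 1)) :
    ∃ S, SRExt K (joinComplex y ys x xs zs) S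
      (2 * ((ys.length + xs.length + zs.length) / 3) + 3) := by
  by_cases hy : ys.length % 3 = 0
  · convert exists_SRExt_joinComplex_of_mod K h hy hxs hzs (by omega) using 3
    omega
  by_cases hx : xs.length % 3 = 0
  · rw [joinComplex_swap]
    convert exists_SRExt_joinComplex_of_mod K (y := x) (ys := xs) (x := y) (xs := ys)
      (zs := zs.reverse) ?_ hx hys (by simpa using hzs) (by simp; omega) using 3
    · simp
      omega
    · rw [← List.append_assoc] at h ⊢
      exact (List.perm_append_comm.append zs.reverse_perm.symm).nodup_iff.1 h
  · convert exists_SRExt_joinComplex K h hys hxs hzs using 3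
    omega

end Main

section EdgeIdeal
open MvPolynomial

theorem List.Nodup.isChain_ne {α : Type} {l : List α} (h : l.Nodup) : l.IsChain (· ≠ ·) :=
  List.Pairwise.isChain h

theorem List.Nodup.isChain_ne_cons_concat {α : Type} {a : α} {l : List α} (h : (a :: l).Nodup)
    (hl : l ≠ []) : (a :: (l ++ [a])).IsChain (· ≠ ·) := by
  match l, hl with
  | b :: l, _ =>
    rw [List.cons_append, List.isChain_cons_cons]
    refine ⟨by grind, List.Nodup.isChain_ne ?_⟩
    grind

variable {σ : Type} {K : Type} [Field K]

theorem srIdeal_chainIndep_le_iff {l : List σ} (hl : l.IsChain (· ≠ ·))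
    {J : Ideal (MvPolynomial σ K)} :
    srIdeal K (ChainIndep l) ≤ J ↔ l.IsChain fun a b => X a * X b ∈ J := by
  constructor
  · intro h
    rw [List.isChain_iff_getElem]
    intro i hi
    refine h (X_mul_X_mem_srIdeal (chainIndep_antitone l) fun F hF => ?_)
    exact List.isChain_iff_getElem.1 hF i hi
  · intro h
    rw [srIdeal_le_iff (chainIndep_antitone l)]
    intro m hm
    rw [ChainIndep, List.isChain_iff_getElem] at hm
    push Not at hm
    obtain ⟨i, hi, ha, hb⟩ := hm
    have hab := List.isChain_iff_getElem.1 hl i hi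
    have hJ := List.isChain_iff_getElem.1 h i hi
    generalize l[i] = a at *
    generalize l[i + 1] = b at *
    have hle : Finsupp.single a 1 + Finsupp.single b 1 ≤ m := by
      classical
      intro v
      clear h hl
      rw [Finset.mem_coe, Finsupp.mem_support_iff] at ha hb
      simp only [Finsupp.add_apply, Finsupp.single_apply]
      grind
    rw [← tsub_add_cancel_of_le hle, ← one_mul (1 : K), ← monomial_mul]
    refine J.mul_mem_left _ ?_
    rwa [← one_mul (1 : K), ← monomial_mul]

theorem srIdeal_joinComplex_le_iff {y x : σ} {ys xs zs : List σ}
    (h : (y :: ys ++ (x :: xs ++ zs)).Nodup) (hys : ys ≠ []) (hxs : xs ≠ [])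
    {J : Ideal (MvPolynomial σ K)} :
    srIdeal K (joinComplex y ys x xs zs) ≤ J ↔
      (y :: (ys ++ [y])).IsChain (fun a b => X a * X b ∈ J) ∧
      (x :: (xs ++ [x])).IsChain (fun a b => X a * X b ∈ J) ∧
      (x :: (zs ++ [y])).IsChain (fun a b => X a * X b ∈ J) := by
  have e : joinComplex y ys x xs zs = fun F => ChainIndep (y :: (ys ++ [y])) F ∧
    ChainIndep (x :: (xs ++ [x])) F ∧ ChainIndep (x :: (zs ++ [y])) F := rfl
  rw [e, srIdeal_inter (chainIndep_antitone _)
      (antitone_and (chainIndep_antitone _) (chainIndep_antitone _)),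
    srIdeal_inter (chainIndep_antitone _) (chainIndep_antitone _), sup_le_iff, sup_le_iff,
    srIdeal_chainIndep_le_iff (List.Nodup.isChain_ne_cons_concat (by grind) hys),
    srIdeal_chainIndep_le_iff (List.Nodup.isChain_ne_cons_concat (by grind) hxs),
    srIdeal_chainIndep_le_iff (List.Nodup.isChain_ne (by grind))]

theorem nodup_map_cast_range (N : ℕ) : ((List.range N).map (Nat.cast : ℕ → ZMod N)).Nodup := by
  refine List.nodup_range.map_on fun a ha b hb h => ?_
  rw [List.mem_range] at ha hb
  have := congrArg ZMod.val h
  rwa [ZMod.val_cast_of_lt ha, ZMod.val_cast_of_lt hb] at this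

theorem map_cast_range_eq (n m k : ℕ) :
    (List.range (n + 1 + (m + 1) + k)).map (Nat.cast : ℕ → ZMod (n + 1 + (m + 1) + k)) =
      0 :: ((List.range n).map fun i => ((i + 1 : ℕ) : ZMod (n + 1 + (m + 1) + k))) ++
      (((n + 1 : ℕ) : ZMod (n + 1 + (m + 1) + k)) ::
        ((List.range m).map fun i => ((n + 1 + (i + 1) : ℕ) : ZMod (n + 1 + (m + 1) + k))) ++
      (List.range k).map fun i => ((n + 1 + (m + 1) + i : ℕ) : ZMod (n + 1 + (m + 1) + k))) := by
  rw [List.range_add, List.range_add, List.range_succ_eq_map, List.range_succ_eq_map (n := m)]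
  simp [Function.comp_def]

theorem isChain_cons_map_range_concat {α : Type} (R : α → α → Prop) (g : ℕ → α) (n : ℕ) (c : α) :
    (g 0 :: ((List.range n).map (fun i => g (i + 1)) ++ [c])).IsChain R ↔
      (∀ i < n, R (g i) (g (i + 1))) ∧ R (g n) c := by
  rw [show g 0 :: ((List.range n).map (fun i => g (i + 1)) ++ [c]) =
      (List.range (n + 1)).map g ++ [c] by
    rw [List.range_succ_eq_map]
    simp [Function.comp_def], List.isChain_append, List.isChain_map, List.isChain_range_succ]
  simp [List.range_succ]

theorem pathJoinIdeal_eq_srIdeal (K : Type) [Field K] {n m : ℕ} (hn : n ≠ 0) (hm : m ≠ 0)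
    (k : ℕ) :
    pathJoinIdeal K (n + 1) (m + 1) k = srIdeal K (joinComplex 0
      ((List.range n).map fun i => ((i + 1 : ℕ) : ZMod (n + 1 + (m + 1) + k)))
      ((n + 1 : ℕ) : ZMod (n + 1 + (m + 1) + k))
      ((List.range m).map fun i => ((n + 1 + (i + 1) : ℕ) : ZMod (n + 1 + (m + 1) + k)))
      ((List.range k).map fun i =>
        ((n + 1 + (m + 1) + i : ℕ) : ZMod (n + 1 + (m + 1) + k)))) := by
  refine eq_of_forall_ge_iff fun J => ?_
  rw [srIdeal_joinComplex_le_iff (map_cast_range_eq n m k ▸ nodup_map_cast_range _)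
    (by simpa using hn) (by simpa using hm)]
  have e₁ := isChain_cons_map_range_concat
    (fun a b : ZMod (n + 1 + (m + 1) + k) => (X a * X b : MvPolynomial _ K) ∈ J) Nat.cast n 0
  have e₂ := isChain_cons_map_range_concat
    (fun a b : ZMod (n + 1 + (m + 1) + k) => (X a * X b : MvPolynomial _ K) ∈ J)
    (fun i => ((n + 1 + i : ℕ) : ZMod (n + 1 + (m + 1) + k))) m ((n + 1 : ℕ) : ZMod _)
  have e₃ := isChain_cons_map_range_concat
    (fun a b : ZMod (n + 1 + (m + 1) + k) => (X a * X b : MvPolynomial _ K) ∈ J)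
    (pathJoinVertex (n + 1) (m + 1) k) k (pathJoinVertex (n + 1) (m + 1) k (k + 1))
  have hz : (List.range k).map (fun i => pathJoinVertex (n + 1) (m + 1) k (i + 1)) =
      (List.range k).map fun i => ((n + 1 + (m + 1) + i : ℕ) : ZMod (n + 1 + (m + 1) + k)) := by
    refine List.map_congr_left fun i hi => ?_
    rw [List.mem_range] at hi
    simp [pathJoinVertex, hi.ne, ← add_assoc]
  have hk : pathJoinVertex (n + 1) (m + 1) k (k + 1) = 0 := by simp [pathJoinVertex]
  rw [hz, hk,
    show pathJoinVertex (n + 1) (m + 1) k 0 = ((n + 1 : ℕ) : ZMod _) by simp [pathJoinVertex]]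
    at e₃
  rw [Nat.cast_zero] at e₁
  rw [add_zero] at e₂
  rw [e₁, e₂, e₃, pathJoinIdeal, Ideal.span_le]
  simp only [Set.union_subset_iff, Set.image_subset_iff, Set.singleton_subset_iff, SetLike.mem_coe]
  constructor
  · rintro ⟨⟨⟨⟨h₁, h₂⟩, h₃⟩, h₄⟩, h₅⟩
    refine ⟨⟨fun i hi => h₁ hi, h₂⟩, ⟨fun i hi => ?_, h₄⟩, fun i hi => ?_, ?_⟩
    · exact h₃ (a := n + 1 + i) ⟨by omega, by omega⟩
    · exact h₅ (a := i) (Set.mem_Iio.2 (by omega))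
    · rw [← hk]
      exact h₅ (a := k) (Set.mem_Iio.2 (by omega))
  · rintro ⟨⟨h₁, h₂⟩, ⟨h₃, h₄⟩, h₅, h₆⟩
    refine ⟨⟨⟨⟨fun i hi => h₁ i hi, h₂⟩, fun i hi => ?_⟩, h₄⟩, fun i hi => ?_⟩
    · obtain ⟨hi₁, hi₂⟩ := Set.mem_Ico.1 hi
      obtain ⟨i, rfl⟩ := Nat.exists_eq_add_of_le hi₁
      exact h₃ i (by omega)
    · rcases (Nat.le_of_lt_succ (Set.mem_Iio.1 hi)).lt_or_eq with hi | rfl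
      · exact h₅ i hi
      · rw [Set.mem_preimage, hk]
        exact h₆

variable [Fintype σ] [DecidableEq σ] {y x : σ} {ys xs zs : List σ}

theorem ara_eq_and_pd_eq_joinComplex_of_two_of_two (h : (y :: ys ++ (x :: xs ++ zs)).Nodup)
    (hys : 2 ≤ ys.length) (hxs : 2 ≤ xs.length) (hzs : zs ≠ [])
    (hN : (ys.length + xs.length + zs.length) % 3 = 2)
    (hyx : ys.length % 3 = 1 ∧ xs.length % 3 = 1) {d : ℕ}
    (hd : d = 2 * ((ys.length + xs.length + zs.length) / 3) + 2) :
    araRank (srIdeal K (joinComplex y ys x xs zs)) = d ∧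
      projDim (MvPolynomial σ K)
        (MvPolynomial σ K ⧸ srIdeal K (joinComplex y ys x xs zs)) = d := by
  obtain ⟨S, hS⟩ := exists_SRExt_joinComplex K h (by grind) (by grind) hzs
  have := List.length_pos_iff.2 hzs
  refine araRank_eq_and_projDim_eq (joinComplex_antitone y ys x xs zs) (by omega) ?_ (S := S) ?_
  · convert Cuts.joinComplex_of_two_of_two K (ys := ys) (xs := xs) (zs := zs)
      (j := ys.length / 3 - 1) (i := xs.length / 3 - 1) (l := zs.length / 3 - 1)
      (by omega) (by omega) (by omega) using 1
    omega
  · convert hS using 1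
    omega

theorem ara_eq_and_pd_eq_joinComplex_of_not (h : (y :: ys ++ (x :: xs ++ zs)).Nodup)
    (hys : 2 ≤ ys.length) (hxs : 2 ≤ xs.length) (hzs : zs ≠ [])
    (hN : (ys.length + xs.length + zs.length) % 3 = 2)
    (hyx : ¬ (ys.length % 3 = 1 ∧ xs.length % 3 = 1)) {d : ℕ}
    (hd : d = 2 * ((ys.length + xs.length + zs.length) / 3) + 3) :
    araRank (srIdeal K (joinComplex y ys x xs zs)) = d ∧
      projDim (MvPolynomial σ K)
        (MvPolynomial σ K ⧸ srIdeal K (joinComplex y ys x xs zs)) = d := by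
  subst hd
  obtain ⟨S, hS⟩ := exists_SRExt_joinComplex_of_not K h (by grind) (by grind) hzs hN hyx
  exact araRank_eq_and_projDim_eq (joinComplex_antitone y ys x xs zs) (by omega)
    (Cuts.joinComplex_of_not K hys hxs hzs hN hyx) hS

end EdgeIdeal

/-- For the graph `G` made of two cycles `Cₙ`, `C_m` (`n, m ≥ 3`) joined by a path with
`k ≥ 1` internal vertices, `N = n + m + k`: if `N ≡ 1 (mod 3)` then
`ara I(G) = pd R/I(G) = (2N-2)/3` when `n ≡ m ≡ 2 (mod 3)`, and
`ara I(G) = pd R/I(G) = (2N+1)/3` otherwise. -/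
theorem path_join_ara_eq_pd_one_mod_three (K : Type) [Field K] (n m k : ℕ)
    (hn : 3 ≤ n) (hm : 3 ≤ m) (hk : 1 ≤ k) (hN : (n + m + k) % 3 = 1) :
    ((n % 3 = 2 ∧ m % 3 = 2) →
        araRank (pathJoinIdeal K n m k) = (2 * (n + m + k) - 2) / 3 ∧
          projDim (MvPolynomial (ZMod (n + m + k)) K)
              (MvPolynomial (ZMod (n + m + k)) K ⧸ pathJoinIdeal K n m k) =
            (((2 * (n + m + k) - 2) / 3 : ℕ) : ℕ∞)) ∧
      (¬(n % 3 = 2 ∧ m % 3 = 2) →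
        araRank (pathJoinIdeal K n m k) = (2 * (n + m + k) + 1) / 3 ∧
          projDim (MvPolynomial (ZMod (n + m + k)) K)
              (MvPolynomial (ZMod (n + m + k)) K ⧸ pathJoinIdeal K n m k) =
            (((2 * (n + m + k) + 1) / 3 : ℕ) : ℕ∞)) := by
  obtain ⟨n, rfl⟩ := Nat.exists_eq_add_of_le' (show 1 ≤ n by omega)
  obtain ⟨m, rfl⟩ := Nat.exists_eq_add_of_le' (show 1 ≤ m by omega)
  rw [pathJoinIdeal_eq_srIdeal K (by omega) (by omega)]
  have hnd := map_cast_range_eq n m k ▸ nodup_map_cast_range (n + 1 + (m + 1) + k)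
  have : NeZero (n + 1 + (m + 1) + k) := ⟨by omega⟩
  have hzs : ((List.range k).map fun i =>
      ((n + 1 + (m + 1) + i : ℕ) : ZMod (n + 1 + (m + 1) + k))) ≠ [] := by
    simp
    omega
  constructor
  · intro h
    apply ara_eq_and_pd_eq_joinComplex_of_two_of_two hnd _ _ hzs <;>
    · simp only [List.length_map, List.length_range]
      omega
  · intro h
    apply ara_eq_and_pd_eq_joinComplex_of_not hnd _ _ hzs <;>
    · simp only [List.length_map, List.length_range]
      omega
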